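/- For every universal oracle machine U, the infinitude probability μ(INF(U)) is a 2-random 0'-right-c.e. real. Conversely, every 2-random 0'-right-c.e. real α ∈ (0,1) equals μ(INF(U)) for some universal oracle machine U. -/

import Mathlib

open scoped Classical
open MeasureTheory

namespace RandProb

/-- Cantor space: the space of infinite binary sequences. -/
abbrev Cantor := ℕ → Bool

/-! ### Oracle partial recursive functions, via codes -/

/-- Codes for partial recursive functions with access to an oracle `O : ℕ → ℕ`.
These codes play the role of (oracle) Turing machines. -/
inductive CodeO : Type
  | zero : CodeO
  | succ : CodeO
  | left : CodeO
  | right : CodeO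
  | oracle : CodeO
  | pair : CodeO → CodeO → CodeO
  | comp : CodeO → CodeO → CodeO
  | prec : CodeO → CodeO → CodeO
  | rfind' : CodeO → CodeO

/-- Evaluation of an oracle code with (total) oracle `O`. -/
def CodeO.eval (O : ℕ → ℕ) : CodeO → ℕ →. ℕ
  | .zero => pure 0
  | .succ => Nat.succ
  | .left => ↑fun n : ℕ => n.unpair.1
  | .right => ↑fun n : ℕ => n.unpair.2
  | .oracle => ↑fun n : ℕ => O n
  | .pair cf cg => fun n => Nat.pair <$> cf.eval O n <*> cg.eval O n
  | .comp cf cg => fun n => cg.eval O n >>= cf.eval O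
  | .prec cf cg =>
    Nat.unpaired fun a n =>
      n.rec (cf.eval O a) fun y IH => do
        let i ← IH
        cg.eval O (Nat.pair a (Nat.pair y i))
  | .rfind' cf =>
    Nat.unpaired fun a m =>
      (Nat.rfind fun n => (fun m => m = 0) <$> cf.eval O (Nat.pair a (n + m))).map (· + m)

/-- A canonical injective numbering of oracle codes. -/
def CodeO.encode : CodeO → ℕ
  | .zero => 0
  | .succ => 1
  | .left => 2
  | .right => 3
  | .oracle => 4
  | .pair cf cg => 2 * (2 * Nat.pair cf.encode cg.encode) + 5
  | .comp cf cg => 2 * (2 * Nat.pair cf.encode cg.encode + 1) + 5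
  | .prec cf cg => 2 * (2 * Nat.pair cf.encode cg.encode) + 6
  | .rfind' cf => 2 * (2 * cf.encode + 1) + 6

/-- The Turing jump of an oracle: the halting problem relative to `O`,
as a `{0,1}`-valued function. -/
noncomputable def jump (O : ℕ → ℕ) : ℕ → ℕ := fun e =>
  if ∃ c : CodeO, c.encode = e ∧ (c.eval O e).Dom then 1 else 0

/-- `iterJump n` is `∅^(n)`, the `n`-th iterate of the halting problem (as an oracle). -/
noncomputable def iterJump : ℕ → ℕ → ℕ
  | 0 => fun _ => 0
  | n + 1 => jump (iterJump n)

/-- `S ⊆ ℕ` is computably enumerable relative to the oracle `O`. -/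
def CeIn (O : ℕ → ℕ) (S : Set ℕ) : Prop := ∃ c : CodeO, S = {m | (c.eval O m).Dom}

/-- The left Dedekind cut of `α` (as a set of codes of rationals) is c.e. in `O`. -/
def LeftCeIn (O : ℕ → ℕ) (α : ℝ) : Prop :=
  CeIn O {m | ∃ q : ℚ, Encodable.encode q = m ∧ (q : ℝ) < α}

/-- The right Dedekind cut of `α` (as a set of codes of rationals) is c.e. in `O`. -/
def RightCeIn (O : ℕ → ℕ) (α : ℝ) : Prop :=
  CeIn O {m | ∃ q : ℚ, Encodable.encode q = m ∧ α < (q : ℝ)}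

/-! ### Martin-Löf randomness for real numbers -/

/-- The `i`-th component of a Martin-Löf test coded by the set `W ⊆ ℕ`:
the union of all open rational intervals whose codes are enumerated into the
`i`-th section of `W`. -/
def testSet (W : Set ℕ) (i : ℕ) : Set ℝ :=
  {x | ∃ p q : ℚ, Nat.pair i (Encodable.encode (p, q)) ∈ W ∧ (p : ℝ) < x ∧ x < (q : ℝ)}

/-- `α` is Martin-Löf random relative to the oracle `O`. -/
def MLRandomIn (O : ℕ → ℕ) (α : ℝ) : Prop :=
  ∀ W : Set ℕ, CeIn O W →
    (∀ i, volume (testSet W i) ≤ ENNReal.ofReal ((2 : ℝ)⁻¹ ^ i)) →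
    ∃ i, α ∉ testSet W i

/-- `α` is `n`-random: Martin-Löf random relative to `∅^(n-1)`. -/
def NRandom (n : ℕ) (α : ℝ) : Prop := MLRandomIn (iterJump (n - 1)) α

/-! ### The uniform measure on Cantor space -/

/-- The binary digits of a real number (meaningful on `[0,1)`). -/
noncomputable def digits (x : ℝ) : Cantor := fun n => decide (⌊x * 2 ^ (n + 1)⌋ % 2 = 1)

/-- The uniform (Lebesgue) product measure on Cantor space, obtained as the
pushforward of Lebesgue measure on `[0,1)` under the binary-digit map. -/
noncomputable def mu : Measure Cantor :=
  Measure.map digits (volume.restrict (Set.Ico (0 : ℝ) 1))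

/-- The uniform measure of a set of elements of Cantor space, as a real number. -/
noncomputable def muR (S : Set Cantor) : ℝ := (mu S).toReal

/-! ### Strings, prefixes and cylinders -/

/-- The length-`n` initial segment of `X ∈ 2^ω`, as a finite binary string. -/
def initSeg (X : Cantor) (n : ℕ) : List Bool := (List.range n).map X

/-- `⟦S⟧`: the elements of Cantor space having a prefix in the set of strings `S`. -/
def cyl (S : Set (List Bool)) : Set Cantor := {X | ∃ n, initSeg X n ∈ S}

/-- A set of strings is prefix-free if none of its elements properly extends another. -/
def IsPrefixFree (S : Set (List Bool)) : Prop := ∀ σ ∈ S, ∀ τ ∈ S, σ <+: τ → σ = τ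

/-- A set of strings is upward closed if it is closed under taking extensions. -/
def UpClosed (S : Set (List Bool)) : Prop := ∀ σ ∈ S, ∀ τ, σ <+: τ → τ ∈ S

/-- Two strings are compatible if one is a prefix of the other. -/
def Compatible (σ τ : List Bool) : Prop := σ <+: τ ∨ τ <+: σ

/-! ### Oracle machines -/

/-- An element of Cantor space viewed as a `{0,1}`-valued oracle. -/
def oX (X : Cantor) : ℕ → ℕ := fun n => cond (X n) 1 0

/-- `evalO X c n`: the (possibly divergent) output of the oracle machine `c`
on input `n` with oracle `X`. -/
def evalO (X : Cantor) (c : CodeO) (n : ℕ) : Part ℕ := c.eval (oX X) n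

/-- The oracle obtained by writing the string `ρ` before the bits of `X`. -/
def prepend (ρ : List Bool) (X : Cantor) : Cantor := fun n =>
  if n < ρ.length then ρ.getD n false else X (n - ρ.length)

/-- `X ∈ 2^ω` extends the finite string `ρ`. -/
def Extends (X : Cantor) (ρ : List Bool) : Prop := initSeg X ρ.length = ρ

/-- `u` is a universal oracle machine: some effective, prefix-free translation
`c ↦ σ_c` satisfies `u(σ_c * X, n) ≃ c(X, n)` for all machines `c`. -/
def UniversalOM (u : CodeO) : Prop :=
  ∃ σ : CodeO → List Bool,
    (∃ f : ℕ → ℕ, Computable f ∧ ∀ c : CodeO, f c.encode = Encodable.encode (σ c)) ∧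
    IsPrefixFree (Set.range σ) ∧
    ∀ (c : CodeO) (X : Cantor) (n : ℕ), evalO (prepend (σ c) X) u n = evalO X c n

/-- `TOT(c)`: the oracles `X` such that the function `c(X)` is total. -/
def TOT (c : CodeO) : Set Cantor := {X | ∀ n, (evalO X c n).Dom}

/-- The domain of the partial function `c(X)`. -/
def domSet (c : CodeO) (X : Cantor) : Set ℕ := {n | (evalO X c n).Dom}

/-- The range of the partial function `c(X)`. -/
def ranSet (c : CodeO) (X : Cantor) : Set ℕ := {v | ∃ n, v ∈ evalO X c n}

/-- `INF(c)`: the oracles `X` such that `c(X)` has infinite domain. -/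
def INF (c : CodeO) : Set Cantor := {X | (domSet c X).Infinite}

/-- `COF(c)`: the oracles `X` such that `c(X)` has cofinite domain. -/
def COF (c : CodeO) : Set Cantor := {X | (domSet c X)ᶜ.Finite}

/-- `COM(c)`: the oracles `X` such that `c(X)` has computable domain. -/
def COM (c : CodeO) : Set Cantor := {X | ComputablePred fun n => n ∈ domSet c X}

/-- The characteristic function of a set of naturals. -/
noncomputable def chi (A : Set ℕ) : ℕ → ℕ := fun n => if n ∈ A then 1 else 0

/-- Turing reducibility between sets of naturals. -/
def TuringLEs (B A : Set ℕ) : Prop := ∃ c : CodeO, ∀ n, c.eval (chi A) n = Part.some (chi B n)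

/-- The halting problem `∅'` as a set of naturals. -/
noncomputable def HaltingSet : Set ℕ := {e | iterJump 1 e = 1}

/-- `COMPL(c)`: the oracles `X` such that the domain of `c(X)` computes the halting problem. -/
noncomputable def COMPL (c : CodeO) : Set Cantor := {X | TuringLEs HaltingSet (domSet c X)}

/-- Turing reducibility between total functions on ℕ. -/
def TuringLEf (f g : ℕ → ℕ) : Prop := ∃ c : CodeO, ∀ n, c.eval g n = Part.some (f n)

/-- A real number viewed as an oracle, via its binary expansion. -/
noncomputable def realOracle (α : ℝ) : ℕ → ℕ := oX (digits α)

/-- Two reals have Turing-incomparable degrees. -/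
noncomputable def TIncompReal (α β : ℝ) : Prop :=
  ¬ TuringLEf (realOracle α) (realOracle β) ∧ ¬ TuringLEf (realOracle β) (realOracle α)

/-! ### Arithmetical hierarchy -/

/-- Evaluation with the trivial (empty) oracle: ordinary partial recursion. -/
def eval0 (c : CodeO) : ℕ →. ℕ := c.eval fun _ => 0

/-- `SigmaNumIdx n c` is the `Σ^0_{n+1}` subset of `ℕ` with index `c`. -/
def SigmaNumIdx : ℕ → CodeO → Set ℕ
  | 0, c => {m | (eval0 c m).Dom}
  | n + 1, c => {m | ∃ k, Nat.pair m k ∉ SigmaNumIdx n c}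

/-- `S ⊆ ℕ` is `Σ^0_n` (intended for `n ≥ 1`). -/
def SigmaN (n : ℕ) (S : Set ℕ) : Prop := ∃ c : CodeO, S = SigmaNumIdx (n - 1) c

/-- The set of codes of the elements of a set of binary strings. -/
def strCodes (S : Set (List Bool)) : Set ℕ := {m | ∃ σ ∈ S, Encodable.encode σ = m}

/-- A set of binary strings is `Σ^0_n`. -/
def SigmaStr (n : ℕ) (S : Set (List Bool)) : Prop := SigmaN n (strCodes S)

/-- A set of binary strings is `Π^0_n`: its complement is `Σ^0_n`. -/
def PiStr (n : ℕ) (S : Set (List Bool)) : Prop := SigmaStr n Sᶜ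

/-- A set of binary strings is c.e. relative to the oracle `O`. -/
def CeStrIn (O : ℕ → ℕ) (S : Set (List Bool)) : Prop := CeIn O (strCodes S)

/-- `SigmaClassIdx n c m` is the `Σ^0_{n+1}` class of elements of Cantor space
with index `c` and parameter `m`. -/
def SigmaClassIdx : ℕ → CodeO → ℕ → Set Cantor
  | 0, c, m => {X | (evalO X c m).Dom}
  | n + 1, c, m => {X | ∃ k, X ∉ SigmaClassIdx n c (Nat.pair m k)}

/-! ### Monotone machines -/

/-- A monotone machine: a partial computable, monotone map on finite binary strings. -/
structure MonoMachine where
  f : List Bool →. List Bool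
  partrec : Partrec f
  mono : ∀ ⦃σ τ a b : List Bool⦄, σ <+: τ → a ∈ f σ → b ∈ f τ → a <+: b

/-- The oracles `X` such that the output of the monotone machine on `X` is infinite. -/
def MonoINF (M : MonoMachine) : Set Cantor :=
  {X | ∀ k, ∃ n a, a ∈ M.f (initSeg X n) ∧ k ≤ a.length}

/-- The `k`-th bit of the output `M(X)` of a monotone machine is `b`. -/
def MonoMachine.hasBit (M : MonoMachine) (X : Cantor) (k : ℕ) (b : Bool) : Prop :=
  ∃ n a, a ∈ M.f (initSeg X n) ∧ a[k]? = some b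

/-- `U` is a universal monotone machine. -/
def UniversalMono (U : MonoMachine) : Prop :=
  ∃ (M : ℕ → MonoMachine) (σ : ℕ → List Bool),
    Partrec₂ (fun (e : ℕ) (τ : List Bool) => (M e).f τ) ∧
    (∀ V : MonoMachine, ∃ e, (M e).f = V.f) ∧
    Computable σ ∧ IsPrefixFree (Set.range σ) ∧
    ∀ e τ, U.f (σ e ++ τ) = (M e).f τ

/-! ### Infinitary self-delimiting machines -/

/-- Chaitin's infinitary self-delimiting machines: `f σ n` is the `n`-th approximation
of the output on program `σ` (`none` meaning divergence); the convergence relation is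
decidable, approximations are monotone, and machines are self-delimiting. -/
structure InfMachine where
  f : List Bool → ℕ → Option (List Bool)
  computable : Computable₂ f
  mono : ∀ σ m n a, n < m → f σ m = some a → ∃ b, f σ n = some b ∧ b <+: a
  sd : ∀ σ τ n a, f σ n = some a → f (σ ++ τ) n = some a

/-- `M^∞(σ)↓`: all approximations converge. -/
def InfMachine.domInf (M : InfMachine) (σ : List Bool) : Prop := ∀ n, M.f σ n ≠ none

/-- The domain of `M^∞`. -/
def InfMachine.DOM (M : InfMachine) : Set (List Bool) := {σ | M.domInf σ}

/-- The output `M^∞(σ)` is infinite (a stream). -/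
def InfMachine.outInf (M : InfMachine) (σ : List Bool) : Prop :=
  ∀ k, ∃ n a, M.f σ n = some a ∧ k ≤ a.length

/-- `FIN(M^∞)`: programs in the domain with finite output. -/
def InfMachine.FIN (M : InfMachine) : Set (List Bool) := {σ | M.domInf σ ∧ ¬ M.outInf σ}

/-- `INF(M^∞)`: programs in the domain with infinite output. -/
def InfMachine.INF (M : InfMachine) : Set (List Bool) := {σ | M.domInf σ ∧ M.outInf σ}

/-- The `k`-th bit of the output `M^∞(σ)` is `b`. -/
def InfMachine.hasBit (M : InfMachine) (σ : List Bool) (k : ℕ) (b : Bool) : Prop :=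
  ∃ n a, M.f σ n = some a ∧ a[k]? = some b

/-- The domain of the prefix-free machine `M^*`: minimal strings in the domain of `M^∞`. -/
def InfMachine.DOMstar (M : InfMachine) : Set (List Bool) :=
  {σ | M.domInf σ ∧ ∀ τ, τ <+: σ → τ ≠ σ → ¬ M.domInf τ}

/-- Programs whose output is a stream with a tail of 1s. -/
def InfMachine.COFout (M : InfMachine) : Set (List Bool) :=
  {σ | M.domInf σ ∧ M.outInf σ ∧ ∃ t, ∀ k, t ≤ k → M.hasBit σ k true}

/-- `A^∞(σ) ≃ B^∞(τ)`: both converge or both diverge, with equal outputs. -/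
def InfAgree (A : InfMachine) (σ : List Bool) (B : InfMachine) (τ : List Bool) : Prop :=
  (A.domInf σ ↔ B.domInf τ) ∧ (A.domInf σ → ∀ k b, (A.hasBit σ k b ↔ B.hasBit τ k b))

/-- `U` is a universal infinitary self-delimiting machine. -/
def UniversalInf (U : InfMachine) : Prop :=
  ∃ (M : ℕ → InfMachine) (σ : ℕ → List Bool),
    Computable (fun p : ℕ × List Bool × ℕ => (M p.1).f p.2.1 p.2.2) ∧
    (∀ V : InfMachine, ∃ e, ∀ τ, InfAgree (M e) τ V τ) ∧
    Computable σ ∧ IsPrefixFree (Set.range σ) ∧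
    ∀ e τ, InfAgree U (σ e ++ τ) (M e) τ

end RandProb

/-!
`INF u` is effectively a `Π₂` class, so its measure is the infimum of a `∅'`-computable sequence of
rationals, hence `∅'`-right-c.e.

It is 2-random: given a `∅'`-test, let a machine `c` read a number `e` in unary from its oracle and
take `e` for a code of the prefix `σ` below which the universal machine `u` runs `c`. When this
guess is right, `c` controls `INF u` on a cylinder whose measure `2 ^ (-n)` it knows. Starting with
the whole cylinder, and using `∅'`, it gives up measure whenever the approximation to `μ (INF u)`
lies in an interval of the `n`-th open set of the test, just enough to bring the sum down to the
left endpoint. The parts of the open set that are passed pay for this, and they have measure at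
most `2 ^ (-n)`, so `μ (INF u)` ends up outside the open set.

The converse follows Kučera and Slaman. Let `a` and `b` decrease to `α` and to `μ (INF u₀)`, where
`u₀` is universal. If for every `d` the descent of `a` lagged behind that of `2 ^ (-d) * b`, the
intervals in which `α` would be caught would form a `∅'`-test. So, `α` being 2-random, for some `d`
the difference `α - 2 ^ (-d) * μ (INF u₀)` is still `∅'`-right-c.e., thus it is the measure of a
`Π₂` class outside the cylinder of `d` zeros. A machine that simulates `u₀` inside this cylinder
and has that class as its infinitude class outside is universal and has infinitude probability `α`.
-/

namespace RandProb

attribute [fun_prop] Computable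

/-! ### Closure properties of computable functions -/

section Computable

variable {α β γ : Type*} [Primcodable α] [Primcodable β] [Primcodable γ]

@[fun_prop] theorem computable_id : Computable fun x : α => x := Computable.id

@[fun_prop] theorem computable_const (b : β) : Computable fun _ : α => b := Computable.const b

@[fun_prop] theorem computable_comp {f : β → γ} {g : α → β} (hf : Computable f)
    (hg : Computable g) : Computable fun x => f (g x) := hf.comp hg

@[fun_prop] theorem computable_pair {f : α → β} {g : α → γ} (hf : Computable f)
    (hg : Computable g) : Computable fun x => (f x, g x) := hf.pair hg

@[fun_prop] theorem computable_fst {f : α → β × γ} (hf : Computable f) :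
    Computable fun x => (f x).1 := Computable.fst.comp hf

@[fun_prop] theorem computable_snd {f : α → β × γ} (hf : Computable f) :
    Computable fun x => (f x).2 := Computable.snd.comp hf

@[fun_prop] theorem computable_cond {c : α → Bool} {f g : α → β} (hc : Computable c)
    (hf : Computable f) (hg : Computable g) : Computable fun x => bif c x then f x else g x :=
  Computable.cond hc hf hg

@[fun_prop] theorem computable_and {f g : α → Bool} (hf : Computable f) (hg : Computable g) :
    Computable fun x => f x && g x := Primrec.and.to_comp.comp hf hg

@[fun_prop] theorem computable_not {f : α → Bool} (hf : Computable f) :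
    Computable fun x => !f x := Primrec.not.to_comp.comp hf

@[fun_prop] theorem computable_beq [DecidableEq β] {f g : α → β} (hf : Computable f)
    (hg : Computable g) : Computable fun x => f x == g x := Primrec.beq.to_comp.comp hf hg

@[fun_prop] theorem computable_encode {f : α → β} (hf : Computable f) :
    Computable fun x => Encodable.encode (f x) := Computable.encode.comp hf

@[fun_prop] theorem computable_decode {f : α → ℕ} (hf : Computable f) :
    Computable fun x => (Encodable.decode (f x) : Option β) := Computable.decode.comp hf

@[fun_prop] theorem computable_nat_add {f g : α → ℕ} (hf : Computable f) (hg : Computable g) :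
    Computable fun x => f x + g x := Primrec.nat_add.to_comp.comp hf hg

@[fun_prop] theorem computable_nat_mul {f g : α → ℕ} (hf : Computable f) (hg : Computable g) :
    Computable fun x => f x * g x := Primrec.nat_mul.to_comp.comp hf hg

@[fun_prop] theorem computable_nat_sub {f g : α → ℕ} (hf : Computable f) (hg : Computable g) :
    Computable fun x => f x - g x := Primrec.nat_sub.to_comp.comp hf hg

@[fun_prop] theorem computable_nat_div {f g : α → ℕ} (hf : Computable f) (hg : Computable g) :
    Computable fun x => f x / g x := Primrec.nat_div.to_comp.comp hf hg

@[fun_prop] theorem computable_nat_mod {f g : α → ℕ} (hf : Computable f) (hg : Computable g) :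
    Computable fun x => f x % g x := Primrec.nat_mod.to_comp.comp hf hg

@[fun_prop] theorem computable_nat_pow {f g : α → ℕ} (hf : Computable f) (hg : Computable g) :
    Computable fun x => f x ^ g x := (Primrec₂.unpaired'.1 Nat.Primrec.pow).to_comp.comp hf hg

@[fun_prop] theorem computable_nat_pair {f g : α → ℕ} (hf : Computable f) (hg : Computable g) :
    Computable fun x => Nat.pair (f x) (g x) := Primrec₂.natPair.to_comp.comp hf hg

@[fun_prop] theorem computable_nat_unpair {f : α → ℕ} (hf : Computable f) :
    Computable fun x => Nat.unpair (f x) := Primrec.unpair.to_comp.comp hf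

@[fun_prop] theorem computable_nat_ble {f g : α → ℕ} (hf : Computable f) (hg : Computable g) :
    Computable fun x => (f x).ble (g x) := by
  refine (Primrec.nat_le.decide.to_comp.comp hf hg).of_eq fun x => ?_
  rw [Bool.eq_iff_iff, decide_eq_true_iff, Nat.ble_eq]

@[fun_prop] theorem computable_nat_blt {f g : α → ℕ} (hf : Computable f) (hg : Computable g) :
    Computable fun x => (f x).blt (g x) :=
  computable_nat_ble (computable_nat_add hf (computable_const 1)) hg

theorem computable_nat_rec {f : α → ℕ} {g : α → β} {h : α → ℕ → β → β} (hf : Computable f)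
    (hg : Computable g) (hh : Computable fun x : α × ℕ × β => h x.1 x.2.1 x.2.2) :
    Computable fun x => (Nat.rec (g x) (h x) (f x) : β) :=
  Computable.nat_rec (h := fun a p => h a p.1 p.2) hf hg hh

@[fun_prop] theorem computable_some {f : α → β} (hf : Computable f) :
    Computable fun x => some (f x) := Computable.option_some.comp hf

@[fun_prop] theorem computable_isSome {f : α → Option β} (hf : Computable f) :
    Computable fun x => (f x).isSome := Primrec.option_isSome.to_comp.comp hf

@[fun_prop] theorem computable_getD {f : α → Option β} {g : α → β} (hf : Computable f)
    (hg : Computable g) : Computable fun x => (f x).getD (g x) := Computable.option_getD hf hg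

@[fun_prop] theorem computable_option_map {f : α → Option β} {g : α → β → γ}
    (hf : Computable f) (hg : Computable fun x : α × β => g x.1 x.2) :
    Computable fun x => (f x).map (g x) := Computable.option_map hf hg

@[fun_prop] theorem computable_option_bind {f : α → Option β} {g : α → β → Option γ}
    (hf : Computable f) (hg : Computable fun x : α × β => g x.1 x.2) :
    Computable fun x => (f x).bind (g x) := Computable.option_bind hf hg

@[fun_prop] theorem computable_list_length {f : α → List β} (hf : Computable f) :
    Computable fun x => (f x).length := Primrec.list_length.to_comp.comp hf

@[fun_prop] theorem computable_list_getElem? {f : α → List β} {g : α → ℕ} (hf : Computable f)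
    (hg : Computable g) : Computable fun x => (f x)[g x]? :=
  Primrec.list_getElem?.to_comp.comp hf hg

@[fun_prop] theorem computable_list_take {f : α → ℕ} {g : α → List β} (hf : Computable f)
    (hg : Computable g) : Computable fun x => (g x).take (f x) :=
  Primrec.list_take.to_comp.comp hf hg

@[fun_prop] theorem computable_list_drop {f : α → ℕ} {g : α → List β} (hf : Computable f)
    (hg : Computable g) : Computable fun x => (g x).drop (f x) :=
  Primrec.list_drop.to_comp.comp hf hg

@[fun_prop] theorem computable_list_append {f g : α → List β} (hf : Computable f)
    (hg : Computable g) : Computable fun x => f x ++ g x :=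
  Primrec.list_append.to_comp.comp hf hg

@[fun_prop] theorem computable_list_cons {f : α → β} {g : α → List β} (hf : Computable f)
    (hg : Computable g) : Computable fun x => f x :: g x := Primrec.list_cons.to_comp.comp hf hg

@[fun_prop] theorem computable_list_idxOf [DecidableEq β] {f : α → β} {g : α → List β}
    (hf : Computable f) (hg : Computable g) : Computable fun x => (g x).idxOf (f x) :=
  Primrec.list_idxOf.to_comp.comp hf hg

@[fun_prop] theorem computable_list_map_range {f : α → ℕ} {p : α → ℕ → β} (hf : Computable f)
    (hp : Computable fun x : α × ℕ => p x.1 x.2) :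
    Computable fun x => (List.range (f x)).map (p x) := by
  refine (computable_nat_rec (g := fun _ => []) (h := fun a n l => l ++ [p a n]) hf
    (by fun_prop) (by fun_prop)).of_eq fun x => ?_
  induction f x with
  | zero => rfl
  | succ n ih => simp only [List.range_succ, List.map_append, ← ih, List.map_singleton]

@[fun_prop] theorem computable_list_all_range {f : α → ℕ} {p : α → ℕ → Bool}
    (hf : Computable f) (hp : Computable fun x : α × ℕ => p x.1 x.2) :
    Computable fun x => (List.range (f x)).all (p x) := by
  refine (computable_nat_rec (g := fun _ => true) (h := fun a n b => b && p a n) hf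
    (by fun_prop) (by fun_prop)).of_eq fun x => ?_
  induction f x with
  | zero => rfl
  | succ n ih => simp [List.range_succ, ← ih]

@[fun_prop] theorem computable_list_any_range {f : α → ℕ} {p : α → ℕ → Bool}
    (hf : Computable f) (hp : Computable fun x : α × ℕ => p x.1 x.2) :
    Computable fun x => (List.range (f x)).any (p x) := by
  refine (computable_not (computable_list_all_range (p := fun a n => !p a n) hf
    (by fun_prop))).of_eq fun x => ?_
  simp [List.not_all_eq_any_not]

@[fun_prop] theorem computable_list_countP_range {f : α → ℕ} {p : α → ℕ → Bool}
    (hf : Computable f) (hp : Computable fun x : α × ℕ => p x.1 x.2) :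
    Computable fun x => (List.range (f x)).countP (p x) := by
  refine (computable_nat_rec (g := fun _ => 0) (h := fun a n c => c + bif p a n then 1 else 0) hf
    (by fun_prop) (by fun_prop)).of_eq fun x => ?_
  induction f x with
  | zero => rfl
  | succ n ih => simp [List.range_succ, ← ih, List.countP_singleton, Bool.cond_eq_ite]

@[fun_prop] theorem computable_list_map {f : α → List β} {g : α → β → γ} (hf : Computable f)
    (hg : Computable fun x : α × β => g x.1 x.2) : Computable fun x => (f x).map (g x) := by
  have hrec : Computable fun x => Nat.rec (motive := fun _ => List γ) []
      (fun n l => l ++ (((f x)[n]?).map fun b => [g x b]).getD []) (f x).length :=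
    computable_nat_rec (h := fun a n l => l ++ (((f a)[n]?).map fun b => [g a b]).getD [])
      (by fun_prop) (by fun_prop) (by fun_prop)
  refine hrec.of_eq fun x => ?_
  have key : ∀ n ≤ (f x).length, Nat.rec (motive := fun _ => List γ) []
      (fun n l => l ++ (((f x)[n]?).map fun b => [g x b]).getD []) n =
        ((f x).take n).map (g x) := by
    intro n hn
    induction n with
    | zero => rfl
    | succ n ih =>
      have hlt : n < (f x).length := hn
      rw [List.take_succ_eq_append_getElem hlt]
      simp only [ih hlt.le, List.getElem?_eq_getElem hlt, Option.map_some, Option.getD_some,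
        List.map_append, List.map_singleton]
  simpa using key _ le_rfl

theorem computable_of_graph {f : α → β} {p : α × β → Bool} (hp : Computable p)
    (h : ∀ x y, p (x, y) = true ↔ f x = y) : Computable f := by
  let search (x : α) (n : ℕ) : Option β :=
    (Encodable.decode n : Option β).bind fun y => bif p (x, y) then some y else none
  have hsearch : Computable₂ search := by
    unfold search
    exact Computable₂.mk (by fun_prop)
  have hmem (x : α) : f x ∈ Nat.rfindOpt (search x) := by
    have hsound (n : ℕ) (y : β) (hy : y ∈ search x n) : f x = y := by
      obtain ⟨z, -, hz⟩ := Option.bind_eq_some_iff.1 hy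
      cases hpz : p (x, z) <;> simp_all
    have hdom : (Nat.rfindOpt (search x)).Dom :=
      Nat.rfindOpt_dom.2 ⟨Encodable.encode (f x), f x, by simp [search, (h x (f x)).2 rfl]⟩
    obtain ⟨y, hy⟩ := Part.dom_iff_mem.1 hdom
    obtain ⟨n, hn⟩ := Nat.rfindOpt_spec hy
    rwa [hsound n y hn]
  exact (Partrec.rfindOpt hsearch).of_eq fun x => Part.eq_some_iff.2 (hmem x)

end Computable

/-! ### Computable rational arithmetic -/

section Rat

open Encodable

theorem encode_rat (q : ℚ) : encode q = Nat.pair (encode q.num) q.den := rfl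

theorem encode_int_natCast (n : ℕ) : encode (n : ℤ) = 2 * n := rfl

theorem encode_int_negSucc (n : ℕ) : encode (Int.negSucc n) = 2 * n + 1 := rfl

theorem toNat_eq_encode (i : ℤ) :
    i.toNat = bif encode i % 2 == 0 then encode i / 2 else 0 := by
  cases i <;> simp [encode_int_natCast, encode_int_negSucc]

theorem natAbs_eq_encode (i : ℤ) : i.natAbs = (encode i + 1) / 2 := by
  cases i <;> simp [encode_int_natCast, encode_int_negSucc] <;> lia

theorem decode_rat_pair (i : ℤ) (d : ℕ) : (decode (Nat.pair (encode i) d) : Option ℚ) =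
    if h : d ≠ 0 ∧ i.natAbs.Coprime d then some ⟨i, d, h.1, h.2⟩ else none := by
  by_cases h : d ≠ 0 ∧ i.natAbs.Coprime d
  · rw [dif_pos h]
    exact encodek (⟨i, d, h.1, h.2⟩ : ℚ)
  · rw [dif_neg h]
    have h' : ¬ (0 < d ∧ i.natAbs.Coprime d) := by rwa [Nat.pos_iff_ne_zero]
    have hd : (decode d : Option {d : ℕ // 0 < d ∧ i.natAbs.Coprime d}) = none := dif_neg h'
    have hsigma : (decode (Nat.pair (encode i) d) :
        Option (Σ i : ℤ, {d : ℕ // 0 < d ∧ i.natAbs.Coprime d})) = none := by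
      simp only [decode_sigma_val, Nat.unpair_pair, encodek, Option.bind_some]
      exact congrArg _ hd
    exact (decode_ofEquiv _ _).trans (congrArg (Option.map _) hsigma)

theorem coprime_iff_forall_lt {a b : ℕ} (hb : b ≠ 0) :
    a.Coprime b ↔ ∀ d < b + 1, d = 1 ∨ a % d ≠ 0 ∨ b % d ≠ 0 := by
  constructor
  · intro h d _
    by_contra! hd
    exact hd.1 (Nat.Coprime.eq_one_of_dvd
      (h.coprime_dvd_left (Nat.dvd_of_mod_eq_zero hd.2.1)) (Nat.dvd_of_mod_eq_zero hd.2.2))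
  · intro h
    have hle : a.gcd b < b + 1 := Nat.lt_succ_of_le (Nat.gcd_le_right _ (Nat.pos_of_ne_zero hb))
    simpa [Nat.mod_eq_zero_of_dvd (a.gcd_dvd_left b), Nat.mod_eq_zero_of_dvd (a.gcd_dvd_right b)]
      using h _ hle

theorem primrecRel_coprime : PrimrecRel fun a b : ℕ => b ≠ 0 ∧ a.Coprime b := by
  have hcommon : PrimrecRel fun (d : ℕ) (p : ℕ × ℕ) => d = 1 ∨ p.1 % d ≠ 0 ∨ p.2 % d ≠ 0 :=
    (Primrec.eq.comp .fst (.const 1)).or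
      ((Primrec.eq.comp (Primrec.nat_mod.comp (Primrec.fst.comp .snd) .fst) (.const 0)).not.or
        (Primrec.eq.comp (Primrec.nat_mod.comp (Primrec.snd.comp .snd) .fst) (.const 0)).not)
  refine ((Primrec.eq.comp .snd (.const 0)).not.and (hcommon.forall_mem_list.comp
    (Primrec.list_range.comp (Primrec.succ.comp .snd)) .id)).of_eq fun p => ?_
  simp only [List.mem_range]
  exact and_congr_right fun hb => (coprime_iff_forall_lt hb).symm

theorem encode_decode_rat (n : ℕ) : encode (decode n : Option ℚ) =
    if n.unpair.2 ≠ 0 ∧ ((n.unpair.1 + 1) / 2).Coprime n.unpair.2 then n + 1 else 0 := by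
  obtain ⟨i, hi⟩ : ∃ i : ℤ, encode i = n.unpair.1 := Equiv.intEquivNat.surjective _
  have hn : n = Nat.pair (encode i) n.unpair.2 := by rw [hi, Nat.pair_unpair]
  rw [← hi, ← natAbs_eq_encode]
  conv_lhs => rw [hn, decode_rat_pair]
  split_ifs
  · rw [encode_some, encode_rat, ← hn]
  · rfl

instance instPrimcodableRat : Primcodable ℚ where
  prim := by
    have hcoprime : PrimrecPred fun n : ℕ =>
        n.unpair.2 ≠ 0 ∧ ((n.unpair.1 + 1) / 2).Coprime n.unpair.2 :=
      primrecRel_coprime.comp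
        (Primrec.nat_div.comp (Primrec.succ.comp (Primrec.fst.comp .unpair)) (.const 2))
        (Primrec.snd.comp .unpair)
    have hvalue := Primrec.ite hcoprime Primrec.succ (Primrec.const 0)
    exact (Primrec.nat_iff.1 hvalue).of_eq fun n => (encode_decode_rat n).symm

theorem rat_eq_div (q : ℚ) : q = (2 * q.num.toNat - q.num.natAbs) / q.den := by
  have hnum : (q.num : ℚ) = 2 * q.num.toNat - q.num.natAbs := by
    have : q.num = 2 * (q.num.toNat : ℤ) - q.num.natAbs := by lia
    exact_mod_cast this
  rw [← hnum, Rat.num_div_den]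

variable {α : Type*} [Primcodable α] {f g : α → ℚ}

@[fun_prop] theorem computable_rat_den (hf : Computable f) : Computable fun x => (f x).den := by
  refine Computable.of_eq (f := fun x => (encode (f x)).unpair.2) (by fun_prop) fun x => ?_
  rw [encode_rat, Nat.unpair_pair]

@[fun_prop] theorem computable_rat_num_toNat (hf : Computable f) :
    Computable fun x => (f x).num.toNat := by
  refine Computable.of_eq (f := fun x => bif (encode (f x)).unpair.1 % 2 == 0
    then (encode (f x)).unpair.1 / 2 else 0) (by fun_prop) fun x => ?_
  rw [toNat_eq_encode, encode_rat, Nat.unpair_pair]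

@[fun_prop] theorem computable_rat_num_natAbs (hf : Computable f) :
    Computable fun x => (f x).num.natAbs := by
  refine Computable.of_eq (f := fun x => ((encode (f x)).unpair.1 + 1) / 2) (by fun_prop)
    fun x => ?_
  rw [natAbs_eq_encode, encode_rat, Nat.unpair_pair]

theorem rat_blt_iff {p q : ℚ} : p.blt q = true ↔ p < q := Iff.rfl

@[fun_prop] theorem computable_rat_blt (hf : Computable f) (hg : Computable g) :
    Computable fun x => (f x).blt (g x) := by
  refine Computable.of_eq (f := fun x =>
    (2 * (f x).num.toNat * (g x).den + (g x).num.natAbs * (f x).den).blt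
      (2 * (g x).num.toNat * (f x).den + (f x).num.natAbs * (g x).den)) (by fun_prop) fun x => ?_
  have hf0 : (0 : ℚ) < (f x).den := by exact_mod_cast (f x).den_pos
  have hg0 : (0 : ℚ) < (g x).den := by exact_mod_cast (g x).den_pos
  rw [Bool.eq_iff_iff, Nat.blt_eq, rat_blt_iff, ← Nat.cast_lt (α := ℚ)]
  conv_rhs => rw [rat_eq_div (f x), rat_eq_div (g x), div_lt_div_iff₀ hf0 hg0]
  push_cast
  constructor <;> intro h <;> linarith

theorem computable_natCast_sub_div :
    Computable fun t : ℕ × ℕ × ℕ => ((t.1 - t.2.1) / (t.2.2 + 1) : ℚ) := by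
  refine computable_of_graph (p := fun p : (ℕ × ℕ × ℕ) × ℚ =>
    p.1.1 * p.2.den + p.2.num.natAbs * (p.1.2.2 + 1) ==
      2 * p.2.num.toNat * (p.1.2.2 + 1) + p.1.2.1 * p.2.den) (by fun_prop) fun t q => ?_
  have hq : (q.den : ℚ) ≠ 0 := by exact_mod_cast q.den_ne_zero
  have ht : (t.2.2 : ℚ) + 1 ≠ 0 := by positivity
  rw [beq_iff_eq, ← Nat.cast_inj (R := ℚ)]
  conv_rhs => rw [rat_eq_div q, div_eq_div_iff ht hq]
  push_cast
  constructor <;> intro h <;> linarith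

theorem computable_rat_of_eq {a b d : α → ℕ} (ha : Computable a) (hb : Computable b)
    (hd : Computable d) (h : ∀ x, d x ≠ 0 ∧ f x = (a x - b x) / d x) : Computable f := by
  refine (computable_natCast_sub_div.comp (ha.pair (hb.pair (g := fun x => d x - 1)
    (by fun_prop)))).of_eq fun x => ?_
  have hpos : 1 ≤ d x := Nat.one_le_iff_ne_zero.2 (h x).1
  simp only [(h x).2, Nat.cast_sub hpos, Nat.cast_one, sub_add_cancel]

@[fun_prop] theorem computable_rat_natCast {k : α → ℕ} (hk : Computable k) :
    Computable fun x => (k x : ℚ) :=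
  computable_rat_of_eq hk (computable_const 0) (computable_const 1) fun x => by simp

theorem computable_rat_sub (hf : Computable f) (hg : Computable g) :
    Computable fun x => f x - g x := by
  refine computable_rat_of_eq
    (a := fun x => 2 * (f x).num.toNat * (g x).den + (g x).num.natAbs * (f x).den)
    (b := fun x => (f x).num.natAbs * (g x).den + 2 * (g x).num.toNat * (f x).den)
    (d := fun x => (f x).den * (g x).den) (by fun_prop) (by fun_prop) (by fun_prop)
    fun x => ⟨Nat.mul_ne_zero (f x).den_ne_zero (g x).den_ne_zero, ?_⟩
  have hf0 : ((f x).den : ℚ) ≠ 0 := by exact_mod_cast (f x).den_ne_zero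
  have hg0 : ((g x).den : ℚ) ≠ 0 := by exact_mod_cast (g x).den_ne_zero
  conv_lhs => rw [rat_eq_div (f x), rat_eq_div (g x), div_sub_div _ _ hf0 hg0]
  push_cast
  ring

theorem computable_rat_add (hf : Computable f) (hg : Computable g) :
    Computable fun x => f x + g x := by
  refine Computable.of_eq (f := fun x => f x - (0 - g x))
    (computable_rat_sub hf (computable_rat_sub (computable_const 0) hg)) fun x => by ring

theorem computable_rat_mul (hf : Computable f) (hg : Computable g) :
    Computable fun x => f x * g x := by
  refine computable_rat_of_eq
    (a := fun x => 4 * (f x).num.toNat * (g x).num.toNat + (f x).num.natAbs * (g x).num.natAbs)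
    (b := fun x => 2 * (f x).num.toNat * (g x).num.natAbs +
      2 * (f x).num.natAbs * (g x).num.toNat)
    (d := fun x => (f x).den * (g x).den) (by fun_prop) (by fun_prop) (by fun_prop)
    fun x => ⟨Nat.mul_ne_zero (f x).den_ne_zero (g x).den_ne_zero, ?_⟩
  conv_lhs => rw [rat_eq_div (f x), rat_eq_div (g x), div_mul_div_comm]
  push_cast
  ring

theorem computable_rat_div_two_pow {n : α → ℕ} (hf : Computable f)
    (hn : Computable n) : Computable fun x => f x / 2 ^ n x := by
  have hinv : Computable fun x => ((2 ^ n x : ℕ) : ℚ)⁻¹ :=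
    computable_rat_of_eq (computable_const 1) (computable_const 0) (d := fun x => 2 ^ n x)
      (by fun_prop) fun x => ⟨by positivity, by simp⟩
  refine Computable.of_eq (computable_rat_mul hf hinv) fun x => ?_
  push_cast
  rw [div_eq_mul_inv]

end Rat

/-! ### Oracle codes -/

section OracleCode

open Nat.Partrec (Code)

/-- Evaluation of an oracle code relative to a partial oracle. -/
def CodeO.evalP (O : ℕ →. ℕ) : CodeO → ℕ →. ℕ
  | .zero => pure 0
  | .succ => Nat.succ
  | .left => ↑fun n : ℕ => n.unpair.1
  | .right => ↑fun n : ℕ => n.unpair.2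
  | .oracle => O
  | .pair cf cg => fun n => Nat.pair <$> cf.evalP O n <*> cg.evalP O n
  | .comp cf cg => fun n => cg.evalP O n >>= cf.evalP O
  | .prec cf cg =>
    Nat.unpaired fun a n =>
      n.rec (cf.evalP O a) fun y IH => do
        let i ← IH
        cg.evalP O (Nat.pair a (Nat.pair y i))
  | .rfind' cf =>
    Nat.unpaired fun a m =>
      (Nat.rfind fun n => (fun m => m = 0) <$> cf.evalP O (Nat.pair a (n + m))).map (· + m)

/-- The ordinary code obtained from an oracle code by answering oracle queries with the
ordinary code `l`. -/
def CodeO.toCode (l : Code) : CodeO → Code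
  | .zero => .zero
  | .succ => .succ
  | .left => .left
  | .right => .right
  | .oracle => l
  | .pair cf cg => .pair (cf.toCode l) (cg.toCode l)
  | .comp cf cg => .comp (cf.toCode l) (cg.toCode l)
  | .prec cf cg => .prec (cf.toCode l) (cg.toCode l)
  | .rfind' cf => .rfind' (cf.toCode l)

/-- An ordinary code, regarded as an oracle code that makes no queries. -/
def CodeO.ofCode : Code → CodeO
  | .zero => .zero
  | .succ => .succ
  | .left => .left
  | .right => .right
  | .pair cf cg => .pair (ofCode cf) (ofCode cg)
  | .comp cf cg => .comp (ofCode cf) (ofCode cg)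
  | .prec cf cg => .prec (ofCode cf) (ofCode cg)
  | .rfind' cf => .rfind' (ofCode cf)

theorem eval_eq_evalP (O : ℕ → ℕ) (c : CodeO) :
    c.eval O = c.evalP fun n => Part.some (O n) := by
  induction c with
  | pair f g hf hg | comp f g hf hg | prec f g hf hg =>
    simp only [CodeO.eval, CodeO.evalP, hf, hg]; rfl
  | rfind' f hf => simp only [CodeO.eval, CodeO.evalP, hf]; rfl
  | _ => rfl

theorem eval_toCode (l : Code) (c : CodeO) : (c.toCode l).eval = c.evalP l.eval := by
  induction c with
  | pair f g hf hg | comp f g hf hg | prec f g hf hg =>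
    simp only [CodeO.toCode, Code.eval, CodeO.evalP, hf, hg]; rfl
  | rfind' f hf => simp only [CodeO.toCode, Code.eval, CodeO.evalP, hf]; rfl
  | _ => rfl

theorem eval_ofCode (O : ℕ → ℕ) (c : Code) : (CodeO.ofCode c).eval O = c.eval := by
  induction c with
  | pair f g hf hg | comp f g hf hg | prec f g hf hg =>
    simp only [CodeO.ofCode, CodeO.eval, Code.eval, hf, hg]; rfl
  | rfind' f hf => simp only [CodeO.ofCode, CodeO.eval, Code.eval, hf]; rfl
  | _ => rfl

theorem mem_evalP_rfind' {O : ℕ →. ℕ} {f : CodeO} {n m : ℕ} :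
    m ∈ (CodeO.rfind' f).evalP O n ↔ ∃ j, ((∃ x ∈ f.evalP O (Nat.pair n.unpair.1 (j + n.unpair.2)),
      decide (x = 0) = true) ∧ ∀ q < j, ∃ x ∈ f.evalP O (Nat.pair n.unpair.1 (q + n.unpair.2)),
      decide (x = 0) = false) ∧ j + n.unpair.2 = m := by
  refine (Part.mem_map_iff _).trans (exists_congr fun j => and_congr_left' ?_)
  refine Nat.mem_rfind.trans (and_congr (Part.mem_map_iff _) ?_)
  exact forall₂_congr fun q _ => Part.mem_map_iff _

/-- The use principle: `m ∈ c.evalP O n` depends on a finite part of the oracle only. -/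
theorem eventually_mem_evalP {O : ℕ →. ℕ} {c : CodeO} {n m : ℕ} (h : m ∈ c.evalP O n) :
    ∀ᶠ k in Filter.atTop, ∀ O' : ℕ →. ℕ, (∀ i < k, ∀ v ∈ O i, v ∈ O' i) → m ∈ c.evalP O' n := by
  induction c generalizing n m with
  | oracle =>
    filter_upwards [Filter.eventually_gt_atTop n] with k hk O' hO using hO n hk m h
  | pair f g hf hg =>
    simp only [CodeO.evalP, Seq.seq, Part.map_eq_map, Part.mem_bind_iff, Part.mem_map_iff] at h ⊢
    obtain ⟨_, ⟨a, ha, rfl⟩, b, hb, rfl⟩ := h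
    filter_upwards [hf ha, hg hb] with k hfk hgk O' hO
      using ⟨_, ⟨a, hfk O' hO, rfl⟩, b, hgk O' hO, rfl⟩
  | comp f g hf hg =>
    obtain ⟨a, ha, hm⟩ := Part.mem_bind_iff.1 h
    filter_upwards [hf hm, hg ha] with k hfk hgk O' hO
      using Part.mem_bind_iff.2 ⟨a, hgk O' hO, hfk O' hO⟩
  | prec f g hf hg =>
    simp only [CodeO.evalP, Nat.unpaired] at h ⊢
    generalize n.unpair.1 = a at h ⊢
    generalize n.unpair.2 = b at h ⊢
    induction b generalizing m with
    | zero => exact hf h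
    | succ b ih =>
      obtain ⟨i, hi, hm⟩ := Part.mem_bind_iff.1 h
      filter_upwards [ih hi, hg hm] with k hik hgk O' hO
        using Part.mem_bind_iff.2 ⟨i, hik O' hO, hgk O' hO⟩
  | rfind' f hf =>
    simp only [mem_evalP_rfind'] at h ⊢
    obtain ⟨j, ⟨⟨x, hx, hx0⟩, hlt⟩, rfl⟩ := h
    have hlt' : ∀ᶠ k in Filter.atTop, ∀ q < j, ∀ O' : ℕ →. ℕ, (∀ i < k, ∀ v ∈ O i, v ∈ O' i) →
        ∃ y ∈ f.evalP O' (Nat.pair n.unpair.1 (q + n.unpair.2)), decide (y = 0) = false := by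
      refine (Filter.eventually_all_finite (Set.finite_lt_nat j)).2 fun q hq => ?_
      obtain ⟨y, hy, hy0⟩ := hlt q hq
      filter_upwards [hf hy] with k hk O' hO using ⟨y, hk O' hO, hy0⟩
    filter_upwards [hf hx, hlt'] with k hxk hltk O' hO
      using ⟨j, ⟨⟨x, hxk O' hO, hx0⟩, fun q hq => hltk q hq O' hO⟩, rfl⟩
  | _ => exact Filter.Eventually.of_forall fun _ _ _ => h

/-- The inverse of `CodeO.encode`. -/
def CodeO.ofNat : ℕ → CodeO
  | 0 => .zero
  | 1 => .succ
  | 2 => .left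
  | 3 => .right
  | 4 => .oracle
  | n + 5 =>
    have : n / 4 < n + 5 := by omega
    have : (n / 4).unpair.1 < n + 5 := (Nat.unpair_left_le _).trans_lt this
    have : (n / 4).unpair.2 < n + 5 := (Nat.unpair_right_le _).trans_lt ‹n / 4 < n + 5›
    if n % 4 = 0 then .pair (ofNat (n / 4).unpair.1) (ofNat (n / 4).unpair.2)
    else if n % 4 = 1 then .prec (ofNat (n / 4).unpair.1) (ofNat (n / 4).unpair.2)
    else if n % 4 = 2 then .comp (ofNat (n / 4).unpair.1) (ofNat (n / 4).unpair.2)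
    else .rfind' (ofNat (n / 4))

theorem encode_ofNat (n : ℕ) : (CodeO.ofNat n).encode = n := by
  induction n using Nat.strong_induction_on with
  | _ n ih =>
    match n with
    | 0 | 1 | 2 | 3 | 4 => simp [CodeO.encode, CodeO.ofNat]
    | n + 5 =>
      have h : n / 4 < n + 5 := by omega
      rw [CodeO.ofNat]
      split_ifs <;>
        simp only [CodeO.encode, ih _ h, ih _ ((Nat.unpair_left_le _).trans_lt h),
          ih _ ((Nat.unpair_right_le _).trans_lt h), Nat.pair_unpair] <;> omega

theorem encode_injective : Function.Injective CodeO.encode := by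
  intro c
  induction c with
  | pair f g hf hg | comp f g hf hg | prec f g hf hg =>
    intro d h
    cases d with
    | pair f' g' | comp f' g' | prec f' g' =>
      simp only [CodeO.encode] at h
      first
      | omega
      | have hpair : Nat.pair f.encode g.encode = Nat.pair f'.encode g'.encode := by omega
        rw [hf (Nat.pair_eq_pair.1 hpair).1, hg (Nat.pair_eq_pair.1 hpair).2]
    | _ => simp only [CodeO.encode] at h; omega
  | rfind' f hf =>
    intro d h
    cases d with
    | rfind' f' =>
      rw [hf (show f.encode = f'.encode by simp only [CodeO.encode] at h; omega)]
    | _ => simp only [CodeO.encode] at h; omega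
  | _ => intro d h; cases d <;> simp only [CodeO.encode] at h <;> first | rfl | omega

theorem ofNat_encode (c : CodeO) : CodeO.ofNat c.encode = c := encode_injective (encode_ofNat _)

instance : Denumerable CodeO :=
  Denumerable.mk' ⟨CodeO.encode, CodeO.ofNat, ofNat_encode, encode_ofNat⟩

/-- The code of `(CodeO.ofNat n).toCode l`, from the list `L` of the codes of
`(CodeO.ofNat i).toCode l` for `i < n`, where `n = L.length`. -/
def toCodeStep (l : Code) (L : List Code) : Code :=
  let m := L.length - 5
  let fst := (L[(m / 4).unpair.1]?).getD .zero
  let snd := (L[(m / 4).unpair.2]?).getD .zero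
  let sub := (L[m / 4]?).getD .zero
  ([.zero, .succ, .left, .right, l][L.length]?).getD
    (([.pair fst snd, .prec fst snd, .comp fst snd, .rfind' sub][m % 4]?).getD .zero)

section Computable

variable {α : Type*} [Primcodable α]

@[fun_prop] theorem computable_code_pair {f g : α → Code} (hf : Computable f)
    (hg : Computable g) : Computable fun x => Code.pair (f x) (g x) :=
  Code.primrec₂_pair.to_comp.comp hf hg

@[fun_prop] theorem computable_code_comp {f g : α → Code} (hf : Computable f)
    (hg : Computable g) : Computable fun x => Code.comp (f x) (g x) :=
  Code.primrec₂_comp.to_comp.comp hf hg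

@[fun_prop] theorem computable_code_prec {f g : α → Code} (hf : Computable f)
    (hg : Computable g) : Computable fun x => Code.prec (f x) (g x) :=
  Code.primrec₂_prec.to_comp.comp hf hg

@[fun_prop] theorem computable_code_rfind' {f : α → Code} (hf : Computable f) :
    Computable fun x => Code.rfind' (f x) := Code.primrec_rfind'.to_comp.comp hf

@[fun_prop] theorem computable_code_curry {f : α → Code} {g : α → ℕ} (hf : Computable f)
    (hg : Computable g) : Computable fun x => Code.curry (f x) (g x) :=
  Code.primrec₂_curry.to_comp.comp hf hg

@[fun_prop] theorem computable_code_evaln {k : α → ℕ} {c : α → Code} {n : α → ℕ}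
    (hk : Computable k) (hc : Computable c) (hn : Computable n) :
    Computable fun x => Code.evaln (k x) (c x) (n x) :=
  Code.primrec_evaln.to_comp.comp ((hk.pair hc).pair hn)

@[fun_prop] theorem computable_codeO_ofNat {f : α → ℕ} (hf : Computable f) :
    Computable fun x => CodeO.ofNat (f x) := (Primrec.ofNat CodeO).to_comp.comp hf

theorem computable_toCodeStep : Computable fun x : Code × List Code => toCodeStep x.1 x.2 := by
  have hsub (g : ℕ → ℕ) (hg : Computable g) :
      Computable fun x : Code × List Code => (x.2[g (x.2.length - 5)]?).getD .zero := by fun_prop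
  have hfst := hsub (fun m => (m / 4).unpair.1) (by fun_prop)
  have hsnd := hsub (fun m => (m / 4).unpair.2) (by fun_prop)
  refine computable_getD (computable_list_getElem? (by fun_prop) (by fun_prop))
    (computable_getD (computable_list_getElem? ?_ (by fun_prop)) (by fun_prop))
  exact computable_list_cons (computable_code_pair hfst hsnd) <|
    computable_list_cons (computable_code_prec hfst hsnd) <|
    computable_list_cons (computable_code_comp hfst hsnd) <|
    computable_list_cons (computable_code_rfind' (hsub (· / 4) (by fun_prop))) (by fun_prop)

theorem toCodeStep_map_range (l : Code) (n : ℕ) :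
    toCodeStep l ((List.range n).map fun i => (CodeO.ofNat i).toCode l) =
      (CodeO.ofNat n).toCode l := by
  match n with
  | 0 | 1 | 2 | 3 | 4 => simp [toCodeStep, CodeO.ofNat, CodeO.toCode]
  | n + 5 =>
    have hn : n / 4 < n + 5 := by omega
    have hget (i : ℕ) (hi : i < n + 5) : (((List.range (n + 5)).map
        fun i => (CodeO.ofNat i).toCode l)[i]?).getD .zero = (CodeO.ofNat i).toCode l := by
      simp [hi]
    rw [CodeO.ofNat]
    simp only [toCodeStep, List.length_map, List.length_range, Nat.add_sub_cancel, hget _ hn,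
      hget _ ((Nat.unpair_left_le _).trans_lt hn), hget _ ((Nat.unpair_right_le _).trans_lt hn)]
    have hmod : n % 4 = 0 ∨ n % 4 = 1 ∨ n % 4 = 2 ∨ n % 4 = 3 := by omega
    rcases hmod with h | h | h | h <;> simp [h, CodeO.toCode]

@[fun_prop] theorem computable_toCode {f : α → Code} {c : α → CodeO} (hf : Computable f)
    (hc : Computable c) : Computable fun x => (c x).toCode (f x) := by
  have hnat : Computable₂ fun (l : Code) (n : ℕ) => (CodeO.ofNat n).toCode l :=
    Computable.nat_strong_rec _ (g := fun l L => some (toCodeStep l L))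
      (computable_some computable_toCodeStep)
      fun l n => congrArg some (toCodeStep_map_range l n)
  refine (hnat.comp hf (Computable.encode.comp hc)).of_eq fun x => ?_
  exact congrArg (CodeO.toCode (f x)) (ofNat_encode (c x))

end Computable

theorem exists_code_getElem? : ∃ c : Code, ∀ (τ : List ℕ) (n : ℕ),
    (c.curry (Encodable.encode τ)).eval n = Part.ofOption τ[n]? := by
  have h : Computable fun p : ℕ =>
      ((Encodable.decode p.unpair.1 : Option (List ℕ)).getD [])[p.unpair.2]? := by fun_prop
  obtain ⟨c, hc⟩ := Code.exists_code.1 (Partrec.nat_iff.1 h.ofOption)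
  exact ⟨c, fun τ n => by simp [Code.eval_curry, hc]⟩

/-- A code that, curried with (the number of) a list, looks up the entries of the list. -/
noncomputable def lookupCode : Code := exists_code_getElem?.choose

theorem eval_curry_lookupCode (τ : List ℕ) (n : ℕ) :
    (lookupCode.curry (Encodable.encode τ)).eval n = Part.ofOption τ[n]? :=
  exists_code_getElem?.choose_spec τ n

/-- Bounded evaluation of an oracle code with a finite oracle. The length of `τ` is read as a
pair `(i, j)`: the oracle is cut down to `i` values and the computation is run for `j` steps. -/
noncomputable def run (c : CodeO) (τ : List ℕ) (n : ℕ) : Option ℕ :=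
  Code.evaln τ.length.unpair.2
    (c.toCode (lookupCode.curry (Encodable.encode (τ.take τ.length.unpair.1)))) n

@[fun_prop] theorem computable_run {α : Type*} [Primcodable α] {c : α → CodeO}
    {τ : α → List ℕ} {n : α → ℕ} (hc : Computable c) (hτ : Computable τ) (hn : Computable n) :
    Computable fun x => run (c x) (τ x) (n x) := by
  unfold run
  fun_prop

theorem mem_eval_of_mem_run {O : ℕ → ℕ} {c : CodeO} {k n m : ℕ}
    (h : m ∈ run c ((List.range k).map O) n) : m ∈ c.eval O n := by
  have h := Code.evaln_sound h
  rw [eval_toCode] at h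
  obtain ⟨k, hk⟩ := (eventually_mem_evalP h).exists
  rw [eval_eq_evalP]
  refine hk _ fun i _ v hv => ?_
  rw [eval_curry_lookupCode, Part.mem_ofOption, Option.mem_def] at hv
  obtain ⟨-, rfl⟩ := List.getElem?_eq_some_iff.1 hv
  simp

theorem frequently_mem_run {O : ℕ → ℕ} {c : CodeO} {n m : ℕ} (h : m ∈ c.eval O n) :
    ∃ᶠ k in Filter.atTop, m ∈ run c ((List.range k).map O) n := by
  rw [eval_eq_evalP] at h
  obtain ⟨i, hi⟩ := (eventually_mem_evalP h).exists
  have hmem := hi (lookupCode.curry (Encodable.encode ((List.range i).map O))).eval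
    fun a ha v hv => by rw [eval_curry_lookupCode]; simpa [ha] using hv
  rw [← eval_toCode] at hmem
  obtain ⟨j, hj⟩ := Code.evaln_complete.1 hmem
  refine Filter.frequently_atTop.2 fun b =>
    ⟨Nat.pair i (max j b), (le_max_right j b).trans (Nat.right_le_pair _ _), ?_⟩
  have htake : ((List.range (Nat.pair i (max j b))).map O).take i = (List.range i).map O := by
    rw [← List.map_take, List.take_range, min_eq_left (Nat.left_le_pair _ _)]
  simpa [run, htake] using Code.evaln_mono (le_max_left j b) hj

end OracleCode

/-! ### Construction of oracle codes -/

section OracleComputable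

variable {α β γ : Type*} [Primcodable α] [Primcodable β] [Primcodable γ]

/-- `T O : α → β` is total and computed, for every oracle `O`, by one and the same oracle code. -/
def OracleComputable (T : (ℕ → ℕ) → α → β) : Prop :=
  ∃ c : CodeO, ∀ O a, c.eval O (Encodable.encode a) = Part.some (Encodable.encode (T O a))

theorem eval_comp {O : ℕ → ℕ} {c d : CodeO} {n m : ℕ} (h : d.eval O n = Part.some m) :
    (CodeO.comp c d).eval O n = c.eval O m :=
  (congrArg (fun o : Part ℕ => o.bind (c.eval O)) h).trans (Part.bind_some m _)

theorem oracleComputable_oracle : OracleComputable fun O => O := ⟨.oracle, fun _ _ => rfl⟩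

theorem oracleComputable_of_computable {f : α → β} (hf : Computable f) :
    OracleComputable fun _ => f := by
  obtain ⟨c, hc⟩ := Nat.Partrec.Code.exists_code.1 hf
  exact ⟨CodeO.ofCode c, fun O a => by simp [eval_ofCode, hc]⟩

theorem oracleComputable_comp {S : (ℕ → ℕ) → β → γ} {T : (ℕ → ℕ) → α → β}
    (hS : OracleComputable S) (hT : OracleComputable T) :
    OracleComputable fun O a => S O (T O a) := by
  obtain ⟨c, hc⟩ := hS
  obtain ⟨d, hd⟩ := hT
  exact ⟨.comp c d, fun O a => (eval_comp (hd O a)).trans (hc O _)⟩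

theorem oracleComputable_pair {S : (ℕ → ℕ) → α → β} {T : (ℕ → ℕ) → α → γ}
    (hS : OracleComputable S) (hT : OracleComputable T) :
    OracleComputable fun O a => (S O a, T O a) := by
  obtain ⟨c, hc⟩ := hS
  obtain ⟨d, hd⟩ := hT
  exact ⟨.pair c d, fun O a => by simp [CodeO.eval, hc, hd, Seq.seq]⟩

theorem oracleComputable_map_range : OracleComputable fun O k => (List.range k).map O := by
  have hstep : OracleComputable fun O (x : ℕ × ℕ × List ℕ) => x.2.2 ++ [O x.2.1] :=
    oracleComputable_comp (S := fun _ (y : ℕ × List ℕ) => y.2 ++ [y.1])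
      (oracleComputable_of_computable (by fun_prop)) <|
    oracleComputable_pair (oracleComputable_comp (S := fun O => O) oracleComputable_oracle
        (oracleComputable_of_computable (f := fun x : ℕ × ℕ × List ℕ => x.2.1) (by fun_prop)))
      (oracleComputable_of_computable (by fun_prop))
  obtain ⟨step, hstep⟩ := hstep
  obtain ⟨nil, hnil⟩ := oracleComputable_of_computable (f := fun _ : ℕ => ([] : List ℕ))
    (by fun_prop)
  obtain ⟨init, hinit⟩ := oracleComputable_of_computable (f := fun k : ℕ => (0, k)) (by fun_prop)
  refine ⟨.comp (.prec nil step) init, fun O k => (eval_comp (hinit O k)).trans ?_⟩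
  simp only [CodeO.eval, Nat.unpaired, Encodable.encode_prod_val, Nat.unpair_pair,
    Encodable.encode_nat]
  induction k with
  | zero => exact hnil O 0
  | succ k ih =>
    have hk := hstep O (0, k, (List.range k).map O)
    simp only [Encodable.encode_prod_val, Encodable.encode_nat] at hk
    simp only [List.range_succ, List.map_append, List.map_singleton, ← hk]
    exact (congrArg (· >>= _) ih).trans (Part.bind_some _ _)

theorem exists_code_rfindOpt {T : (ℕ → ℕ) → ℕ × ℕ → Option ℕ} (hT : OracleComputable T) :
    ∃ c : CodeO, ∀ O n, c.eval O n = Nat.rfindOpt fun k => T O (n, k) := by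
  obtain ⟨test, htest⟩ := oracleComputable_comp (S := fun _ o => bif Option.isSome o then 0 else 1)
    (oracleComputable_of_computable (by fun_prop)) hT
  obtain ⟨out, hout⟩ := oracleComputable_comp (S := fun _ o => Option.getD o 0)
    (oracleComputable_of_computable (by fun_prop)) hT
  obtain ⟨start, hstart⟩ := oracleComputable_of_computable (f := fun n : ℕ => (n, 0)) (by fun_prop)
  obtain ⟨self, hself⟩ := oracleComputable_of_computable (f := fun n : ℕ => n) (by fun_prop)
  simp only [Encodable.encode_nat, Prod.forall, Encodable.encode_prod_val] at *
  refine ⟨.comp out (.pair self (.comp (.rfind' test) start)), fun O n => ?_⟩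
  have hbool (o : Option ℕ) : decide ((bif o.isSome then 0 else 1) = 0) = o.isSome := by
    cases o <;> rfl
  have hfind : (CodeO.comp (.rfind' test) start).eval O n =
      Nat.rfind fun k => (T O (n, k)).isSome := by
    rw [eval_comp (hstart O n)]
    simp only [CodeO.eval, Nat.unpaired, Nat.unpair_pair, add_zero, htest, Part.map_eq_map,
      Part.map_some, hbool]
    exact Part.map_id' (fun _ => rfl) _
  have hpair : (CodeO.pair self (.comp (.rfind' test) start)).eval O n =
      (Nat.rfind fun k => (T O (n, k)).isSome).map (Nat.pair n) := by
    change Seq.seq (Nat.pair <$> self.eval O n)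
      (fun _ => (CodeO.comp (.rfind' test) start).eval O n) = _
    simp [hfind, hself, Seq.seq]
  ext m
  refine Part.mem_bind_iff.trans (Iff.trans ?_ Part.mem_bind_iff.symm)
  simp only [hpair, Part.mem_map_iff, exists_exists_and_eq_and, hout]
  refine exists_congr fun k => and_congr_right fun hk => ?_
  obtain ⟨v, hv⟩ := Option.isSome_iff_exists.1 (Part.mem_some_iff.1 (Nat.mem_rfind.1 hk).1).symm
  simp [hv]

theorem exists_code_search_prefix {G : List ℕ → ℕ → Option ℕ}
    (hG : Computable fun x : List ℕ × ℕ => G x.1 x.2) :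
    ∃ c : CodeO, ∀ O n, c.eval O n = Nat.rfindOpt fun k => G ((List.range k).map O) n :=
  exists_code_rfindOpt (T := fun O x => G ((List.range x.2).map O) x.1) <|
    oracleComputable_comp (oracleComputable_of_computable hG) <|
    oracleComputable_pair (oracleComputable_comp oracleComputable_map_range
        (oracleComputable_of_computable Computable.snd))
      (oracleComputable_of_computable Computable.fst)

theorem exists_machine_search_initSeg {G : List Bool → ℕ → Option ℕ}
    (hG : Computable fun x : List Bool × ℕ => G x.1 x.2) :
    ∃ c : CodeO, ∀ X n, evalO X c n = Nat.rfindOpt fun k => G (initSeg X k) n := by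
  obtain ⟨c, hc⟩ := exists_code_search_prefix (G := fun τ n => G (τ.map (· == 1)) n) (by fun_prop)
  refine ⟨c, fun X n => ?_⟩
  have hX (k : ℕ) : ((List.range k).map (oX X)).map (· == 1) = initSeg X k := by
    simp only [List.map_map, initSeg]
    refine List.map_congr_left fun i _ => ?_
    cases h : X i <;> simp [oX, h]
  simp only [evalO, hc, hX]

end OracleComputable

/-! ### Limit computability and the halting problem -/

section LimitComputable

open Filter

variable {α β γ : Type*} [Primcodable α] [Primcodable β] [Primcodable γ]

/-- `f` is the pointwise limit of a computable sequence of functions that is eventually constant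
at every argument. By Shoenfield's limit lemma this means that `f` is computable from `∅'`. -/
def LimitComputable (f : α → β) : Prop :=
  ∃ F : α × ℕ → β, Computable F ∧ ∀ a, ∀ᶠ t in atTop, F (a, t) = f a

theorem limitComputable_of_computable {f : α → β} (hf : Computable f) : LimitComputable f :=
  ⟨fun x => f x.1, by fun_prop, fun _ => Eventually.of_forall fun _ => rfl⟩

theorem limitComputable_comp {f : β → γ} {g : α → β} (hf : LimitComputable f)
    (hg : LimitComputable g) : LimitComputable fun a => f (g a) := by
  obtain ⟨F, hF, hFf⟩ := hf
  obtain ⟨G, hG, hGg⟩ := hg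
  refine ⟨fun x => F (G x, x.2), by fun_prop, fun a => ?_⟩
  filter_upwards [hGg a, hFf (g a)] with t hGt hFt
  rw [hGt, hFt]

theorem limitComputable_comp_computable {f : β → γ} {g : α → β} (hf : LimitComputable f)
    (hg : Computable g) : LimitComputable fun a => f (g a) :=
  limitComputable_comp hf (limitComputable_of_computable hg)

theorem limitComputable_pair {f : α → β} {g : α → γ} (hf : LimitComputable f)
    (hg : LimitComputable g) : LimitComputable fun a => (f a, g a) := by
  obtain ⟨F, hF, hFf⟩ := hf
  obtain ⟨G, hG, hGg⟩ := hg
  refine ⟨fun x => (F x, G x), by fun_prop, fun a => ?_⟩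
  filter_upwards [hFf a, hGg a] with t hFt hGt
  rw [hFt, hGt]

theorem limitComputable_comp₂ {δ : Type*} [Primcodable δ] {f : β → γ → δ} {g : α → β} {h : α → γ}
    (hf : Computable fun x : β × γ => f x.1 x.2) (hg : LimitComputable g)
    (hh : LimitComputable h) : LimitComputable fun a => f (g a) (h a) :=
  limitComputable_comp (limitComputable_of_computable hf) (limitComputable_pair hg hh)

theorem limitComputable_nat_rec {g : α → β} {h : α → ℕ → β → β} (hg : LimitComputable g)
    (hh : LimitComputable fun x : α × ℕ × β => h x.1 x.2.1 x.2.2) :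
    LimitComputable fun x : α × ℕ => (Nat.rec (g x.1) (h x.1) x.2 : β) := by
  obtain ⟨G, hG, hGg⟩ := hg
  obtain ⟨H, hH, hHh⟩ := hh
  refine ⟨fun x => Nat.rec (G (x.1.1, x.2)) (fun n r => H ((x.1.1, n, r), x.2)) x.1.2,
    computable_nat_rec (g := fun x : (α × ℕ) × ℕ => G (x.1.1, x.2))
      (h := fun x n r => H ((x.1.1, n, r), x.2))
      (by fun_prop) (by fun_prop) (by fun_prop), fun ⟨a, n⟩ => ?_⟩
  induction n with
  | zero => exact hGg a
  | succ n ih =>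
    filter_upwards [ih, hHh (a, n, Nat.rec (g a) (h a) n)] with t ht hHt
    simp only [ht, hHt]

theorem limitComputable_map_range {f : ℕ → β} (hf : LimitComputable f) :
    LimitComputable fun n => (List.range n).map f := by
  obtain ⟨F, hF, hFf⟩ := hf
  refine ⟨fun x => (List.range x.1).map fun i => F (i, x.2), by fun_prop, fun n => ?_⟩
  filter_upwards [(eventually_all_finite (Set.finite_lt_nat n)).2 fun i _ => hFf i] with t ht
  exact List.map_congr_left fun i hi => ht i (List.mem_range.1 hi)

theorem limitComputable_exists {p : α × ℕ → Bool} (hp : Computable p) :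
    LimitComputable fun a => decide (∃ t, p (a, t) = true) := by
  refine ⟨fun x => (List.range x.2).any fun t => p (x.1, t), by fun_prop, fun a => ?_⟩
  by_cases h : ∃ t, p (a, t) = true
  · obtain ⟨t, ht⟩ := h
    filter_upwards [eventually_gt_atTop t] with s hs
    exact (List.any_eq_true.2 ⟨t, List.mem_range.2 hs, ht⟩).trans (decide_eq_true ⟨t, ht⟩).symm
  · refine Eventually.of_forall fun s => ?_
    push Not at h
    simp [h]

theorem iterJump_one_eq_ite (e : ℕ) : iterJump 1 e =
    if ∃ k, (run (CodeO.ofNat e) ((List.range k).map fun _ => 0) e).isSome then 1 else 0 := by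
  change (if _ then 1 else 0) = _
  refine if_congr ?_ rfl rfl
  constructor
  · rintro ⟨c, rfl, h⟩
    obtain ⟨v, hv⟩ := Part.dom_iff_mem.1 h
    obtain ⟨k, hk⟩ := (frequently_mem_run hv).exists
    exact ⟨k, Option.isSome_iff_exists.2 ⟨v, by rwa [ofNat_encode]⟩⟩
  · rintro ⟨k, hk⟩
    obtain ⟨v, hv⟩ := Option.isSome_iff_exists.1 hk
    exact ⟨_, encode_ofNat e, Part.dom_iff_mem.2 ⟨v, mem_eval_of_mem_run hv⟩⟩

theorem limitComputable_iterJump_one : LimitComputable (iterJump 1) := by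
  have hdec := limitComputable_exists (p := fun x : ℕ × ℕ =>
    (run (CodeO.ofNat x.1) ((List.range x.2).map fun _ => 0) x.1).isSome) (by fun_prop)
  have hJ := limitComputable_comp (limitComputable_of_computable
    (f := fun b : Bool => bif b then 1 else 0) (by fun_prop)) hdec
  simpa only [Bool.cond_decide, ← iterJump_one_eq_ite] using hJ

theorem limitComputable_run_iterJump_one (c : CodeO) : LimitComputable fun x : ℕ × ℕ =>
    (run c ((List.range x.2).map (iterJump 1)) x.1).isSome :=
  limitComputable_comp₂ (f := fun τ n => (run c τ n).isSome) (by fun_prop)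
    (limitComputable_comp_computable (f := fun k => (List.range k).map (iterJump 1))
      (limitComputable_map_range limitComputable_iterJump_one) Computable.snd)
    (limitComputable_of_computable Computable.fst)

/-- An oracle code for the constant function with value `n`. -/
def constCode : ℕ → CodeO
  | 0 => .zero
  | n + 1 => .comp .succ (constCode n)

theorem eval_constCode (O : ℕ → ℕ) (n m : ℕ) : (constCode n).eval O m = Part.some n := by
  induction n with
  | zero => rfl
  | succ n ih => exact eval_comp ih

theorem computable_encode_constCode : Computable fun n => (constCode n).encode := by
  have h := computable_nat_rec (f := fun n : ℕ => n) (g := fun _ => 0)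
    (h := fun _ _ r => 2 * (2 * Nat.pair 1 r + 1) + 5) (by fun_prop) (by fun_prop) (by fun_prop)
  refine h.of_eq fun n => ?_
  induction n with
  | zero => rfl
  | succ n ih => simp only [constCode, CodeO.encode, ← ih]

theorem computable_guard {p : α → Bool} (hp : Computable p) {v : β} :
    Computable fun a => bif p a then some v else none :=
  Computable.cond hp (Computable.const (some v)) (Computable.const none)

theorem rfindOpt_bool_dom {p : ℕ → Bool} {v : ℕ} :
    (Nat.rfindOpt fun k => bif p k then some v else none).Dom ↔ ∃ k, p k = true := by
  refine Nat.rfindOpt_dom.trans (exists_congr fun k => ?_)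
  cases p k <;> simp

/-- The halting problem decides `Σ₁` facts. -/
theorem exists_computable_iterJump_one_eq_zero_iff {p : ℕ × ℕ → Bool} (hp : Computable p) :
    ∃ q : ℕ → ℕ, Computable q ∧ ∀ n, iterJump 1 (q n) = 0 ↔ ∀ t, p (n, t) = true := by
  obtain ⟨r, hr⟩ := exists_code_search_prefix
    (G := fun τ n => bif !p (n, τ.length) then some 0 else none)
    (computable_guard (computable_not (hp.comp
      (g := fun x : List ℕ × ℕ => (x.2, x.1.length)) (by fun_prop))))
  refine ⟨fun n => (CodeO.comp r (constCode n)).encode, ?_, fun n => ?_⟩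
  · have hconst := computable_encode_constCode
    simp only [CodeO.encode]
    fun_prop
  · have hdom : ((CodeO.comp r (constCode n)).eval (iterJump 0)
        (CodeO.comp r (constCode n)).encode).Dom ↔ ∃ t, p (n, t) = false := by
      rw [eval_comp (eval_constCode _ n _), hr, rfindOpt_bool_dom]
      simp
    have hcode : (∃ c : CodeO, c.encode = (CodeO.comp r (constCode n)).encode ∧
        (c.eval (iterJump 0) (CodeO.comp r (constCode n)).encode).Dom) ↔
          ∃ t, p (n, t) = false := by
      rw [← hdom]
      exact ⟨fun ⟨c, hc, h⟩ => encode_injective hc ▸ h, fun h => ⟨_, rfl, h⟩⟩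
    change (if _ then 1 else 0) = 0 ↔ _
    rw [if_congr hcode rfl rfl]
    simp

theorem ceIn_iterJump_one_of_sigma_two {p : (ℕ × ℕ) × ℕ → Bool} (hp : Computable p) :
    CeIn (iterJump 1) {m | ∃ s, ∀ t, p ((m, s), t) = true} := by
  obtain ⟨q, hq, hqp⟩ := exists_computable_iterJump_one_eq_zero_iff
    (p := fun x => p (x.1.unpair, x.2)) (hp.comp (by fun_prop))
  obtain ⟨c, hc⟩ := exists_code_search_prefix (G := fun τ m => bif (List.range τ.length).any
    fun s => τ[q (Nat.pair m s)]?.getD 1 == 0 then some 0 else none)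
    (computable_guard (computable_list_any_range (by fun_prop) (by fun_prop)))
  refine ⟨c, Set.ext fun m => ?_⟩
  simp only [Set.mem_ofPred_eq, hc, rfindOpt_bool_dom, List.any_eq_true, List.mem_range, beq_iff_eq,
    List.length_map, List.length_range]
  have hs (s : ℕ) : (∀ t, p ((m, s), t) = true) ↔ iterJump 1 (q (Nat.pair m s)) = 0 := by
    simp [hqp]
  simp only [hs]
  constructor
  · rintro ⟨s, hs⟩
    refine ⟨max s (q (Nat.pair m s)) + 1, s, by omega, ?_⟩
    rw [List.getElem?_map, List.getElem?_range (by omega), Option.map_some, hs, Option.getD_some]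
  · rintro ⟨k, s, -, hk⟩
    refine ⟨s, ?_⟩
    by_cases hlt : q (Nat.pair m s) < k
    · simpa [List.getElem?_range hlt] using hk
    · simp [Nat.not_lt.1 hlt] at hk

theorem ceIn_iterJump_one_iff {S : Set ℕ} : CeIn (iterJump 1) S ↔
    ∃ p : ℕ × ℕ → Bool, LimitComputable p ∧ ∀ m, m ∈ S ↔ ∃ s, p (m, s) = true := by
  constructor
  · rintro ⟨c, rfl⟩
    refine ⟨_, limitComputable_run_iterJump_one c, fun m => ?_⟩
    simp only [Set.mem_ofPred_eq, Part.dom_iff_mem, Option.isSome_iff_exists]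
    exact ⟨fun ⟨v, hv⟩ => (frequently_mem_run hv).exists.imp fun _ h => ⟨v, h⟩,
      fun ⟨_, v, h⟩ => ⟨v, mem_eval_of_mem_run h⟩⟩
  · rintro ⟨p, ⟨F, hF, hFp⟩, hp⟩
    have hS : S = {m | ∃ s : ℕ, ∀ t, F ((m, s.unpair.1), t + s.unpair.2) = true} := by
      ext m
      refine (hp m).trans ⟨fun ⟨s, hs⟩ => ?_, fun ⟨s, hs⟩ => ⟨s.unpair.1, ?_⟩⟩
      · obtain ⟨b, hb⟩ := eventually_atTop.1 (hFp (m, s))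
        exact ⟨Nat.pair s b, fun t => by simp [hb (t + b) (by omega), hs]⟩
      · obtain ⟨b, hb⟩ := eventually_atTop.1 (hFp (m, s.unpair.1))
        rw [← hb (b + s.unpair.2) (by omega)]
        exact hs b
    rw [hS]
    exact ceIn_iterJump_one_of_sigma_two
      (p := fun x => F ((x.1.1, x.1.2.unpair.1), x.2 + x.1.2.unpair.2)) (by fun_prop)

end LimitComputable

/-! ### Right-c.e. reals relative to the halting problem -/

section RightCe

open Filter Topology

theorem limitComputable_iSup {α : Type*} [Primcodable α] {m : α × ℕ → ℕ} (hm : Computable m)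
    (hmono : ∀ a, Monotone fun t => m (a, t))
    (hbdd : ∀ a, BddAbove (Set.range fun t => m (a, t))) :
    LimitComputable fun a => ⨆ t, m (a, t) := by
  refine ⟨m, hm, fun a => ?_⟩
  obtain ⟨t, ht⟩ := Nat.sSup_mem (Set.range_nonempty fun t => m (a, t)) (hbdd a)
  filter_upwards [eventually_ge_atTop t] with s hs
  exact le_antisymm (le_ciSup (hbdd a) s) (ht.symm.trans_le (hmono a hs))

theorem decode_rat_eq_some_iff {m : ℕ} {q : ℚ} :
    Encodable.decode m = some q ↔ Encodable.encode q = m := by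
  refine ⟨fun h => ?_, fun h => h ▸ Encodable.encodek q⟩
  have hm := encode_decode_rat m
  rw [h, Encodable.encode_some] at hm
  split_ifs at hm; simpa using hm

theorem rightCeIn_iterJump_one_of_isGLB {a : ℕ → ℚ} (ha : LimitComputable a) {α : ℝ}
    (hα : IsGLB (Set.range fun n => (a n : ℝ)) α) : RightCeIn (iterJump 1) α := by
  refine ceIn_iterJump_one_iff.2
    ⟨fun x => ((Encodable.decode x.1).map fun q => Rat.blt (a x.2) q).getD false, ?_, fun m => ?_⟩
  · exact limitComputable_comp₂
      (f := fun (r : ℚ) m => ((Encodable.decode m).map fun q => Rat.blt r q).getD false)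
      (by fun_prop) (limitComputable_comp_computable ha Computable.snd)
      (limitComputable_of_computable Computable.fst)
  · have hdecode (o : Option ℚ) (s : ℕ) : (o.map fun q => Rat.blt (a s) q).getD false = true ↔
        ∃ q, o = some q ∧ (a s : ℝ) < q := by
      cases o <;> simp [rat_blt_iff]
    simp only [hdecode, decode_rat_eq_some_iff]
    refine ⟨fun ⟨q, hqm, hq⟩ => ?_, fun ⟨s, q, hqm, hs⟩ => ⟨q, hqm, ?_⟩⟩
    · obtain ⟨_, ⟨s, rfl⟩, hs⟩ := (isGLB_lt_iff hα).1 hq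
      exact ⟨s, q, hqm, hs⟩
    · exact (isGLB_lt_iff hα).2 ⟨_, ⟨s, rfl⟩, hs⟩

theorem exists_isGLB_of_rightCeIn_iterJump_one {α : ℝ} (h : RightCeIn (iterJump 1) α) :
    ∃ a : ℕ → ℚ, LimitComputable a ∧ (∀ n, α < a n) ∧
      IsGLB (Set.range fun n => (a n : ℝ)) α := by
  obtain ⟨p, hp, hpα⟩ := ceIn_iterJump_one_iff.1 h
  obtain ⟨q₀, hq₀⟩ := exists_rat_gt α
  let a (n : ℕ) : ℚ := bif p n.unpair then (Encodable.decode n.unpair.1).getD q₀ else q₀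
  have ha : LimitComputable a :=
    limitComputable_comp₂ (g := fun n : ℕ => p n.unpair) (h := fun n => n)
      (f := fun b (n : ℕ) => bif b then (Encodable.decode n.unpair.1).getD q₀ else q₀) (by fun_prop)
      (limitComputable_comp_computable hp (by fun_prop))
      (limitComputable_of_computable computable_id)
  have hlt (n : ℕ) : α < a n := by
    rcases hpn : p n.unpair with _ | _
    · simpa [a, hpn]
    · obtain ⟨q, hqm, hq⟩ := (hpα n.unpair.1).2 ⟨_, hpn⟩
      simpa [a, hpn, ← hqm]
  refine ⟨a, ha, hlt, Set.forall_mem_range.2 fun n => (hlt n).le, fun b hb => ?_⟩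
  by_contra! hαb
  obtain ⟨q, hαq, hqb⟩ := exists_rat_btwn hαb
  obtain ⟨s, hs⟩ := (hpα (Encodable.encode q)).1 ⟨q, rfl, hαq⟩
  have haq : a (Nat.pair (Encodable.encode q) s) = q := by
    simp [a, hs]
  exact hqb.not_ge (haq ▸ hb (Set.mem_range_self (Nat.pair (Encodable.encode q) s)))

theorem exists_antitone_isGLB_of_rightCeIn_iterJump_one {α : ℝ} (h : RightCeIn (iterJump 1) α) :
    ∃ a : ℕ → ℚ, LimitComputable a ∧ Antitone a ∧ (∀ n, α < a n) ∧
      IsGLB (Set.range fun n => (a n : ℝ)) α := by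
  obtain ⟨a, ha, hlt, hα⟩ := exists_isGLB_of_rightCeIn_iterJump_one h
  let m (n : ℕ) : ℚ := Nat.rec (a 0) (fun n r => bif Rat.blt (a n) r then a n else r) n
  have hm_succ (n : ℕ) : m (n + 1) = min (m n) (a n) := by
    change (bif Rat.blt (a n) (m n) then a n else m n) = _
    rcases hlt : Rat.blt (a n) (m n) with _ | _
    · exact (min_eq_left (not_lt.1 (mt rat_blt_iff.2 (by simp [hlt])))).symm
    · exact (min_eq_right (rat_blt_iff.1 hlt).le).symm
  refine ⟨m, ?_, antitone_nat_of_succ_le fun n => (hm_succ n).trans_le (min_le_left _ _),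
    fun n => ?_, ?_⟩
  · exact limitComputable_comp_computable (limitComputable_nat_rec (g := fun _ : ℕ => a 0)
      (h := fun _ n r => bif Rat.blt (a n) r then a n else r)
      (limitComputable_of_computable (by fun_prop))
      (limitComputable_comp₂ (f := fun x y : ℚ => bif Rat.blt x y then x else y) (by fun_prop)
        (limitComputable_comp_computable ha (g := fun x : ℕ × ℕ × ℚ => x.2.1) (by fun_prop))
        (limitComputable_of_computable (by fun_prop))))
      (g := fun n => (0, n)) (by fun_prop)
  · induction n with
    | zero => exact hlt 0
    | succ n ih => simpa [hm_succ] using ⟨ih, hlt n⟩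
  · refine (isGLB_congr (Set.ext fun b => ?_)).2 hα
    simp only [mem_lowerBounds, Set.forall_mem_range]
    constructor
    · intro hb n
      exact (hb (n + 1)).trans (by exact_mod_cast (hm_succ n).trans_le (min_le_right _ _))
    · intro hb n
      induction n with
      | zero => exact hb 0
      | succ n ih => simpa [hm_succ] using ⟨ih, hb n⟩

end RightCe

/-! ### Initial segments, shifts and the uniform measure -/

section Measure

variable {X : Cantor} {π : List Bool}

@[simp] theorem length_initSeg (X : Cantor) (n : ℕ) : (initSeg X n).length = n := by
  simp [initSeg]

theorem initSeg_succ (X : Cantor) (n : ℕ) : initSeg X (n + 1) = initSeg X n ++ [X n] := by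
  simp [initSeg, List.range_succ]

theorem take_initSeg (X : Cantor) {m n : ℕ} (h : m ≤ n) : (initSeg X n).take m = initSeg X m := by
  simp [initSeg, ← List.map_take, List.take_range, h]

/-- `X` with its first `d` bits removed. -/
def shift (d : ℕ) (X : Cantor) : Cantor := fun n => X (n + d)

theorem shift_shift (d e : ℕ) (X : Cantor) : shift e (shift d X) = shift (d + e) X := by
  funext n
  simp [shift, add_comm, add_left_comm]

theorem drop_initSeg (X : Cantor) (d n : ℕ) :
    (initSeg X n).drop d = initSeg (shift d X) (n - d) := by
  refine List.ext_getElem (by simp) fun i _ _ => ?_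
  simp [initSeg, shift, add_comm]

theorem shift_prepend (π : List Bool) (X : Cantor) : shift π.length (prepend π X) = X := by
  funext n
  simp [shift, prepend]

theorem extends_prepend (π : List Bool) (X : Cantor) : Extends (prepend π X) π := by
  refine List.ext_getElem (by simp) fun i _ h => ?_
  simp [initSeg, prepend, h]

theorem prepend_shift (h : Extends X π) : prepend π (shift π.length X) = X := by
  funext n
  unfold prepend shift
  split_ifs with hn
  · have hget : π[n]? = (initSeg X π.length)[n]? := by rw [h]
    rw [List.getD_eq_getElem?_getD, hget]
    simp [initSeg, hn]
  · rw [Nat.sub_add_cancel (not_lt.1 hn)]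

theorem measurable_shift (d : ℕ) : Measurable (shift d) :=
  measurable_pi_iff.2 fun n => measurable_pi_apply (n + d)

theorem measurable_prepend (π : List Bool) : Measurable (prepend π) := by
  refine measurable_pi_iff.2 fun n => ?_
  unfold prepend
  split_ifs
  · exact measurable_const
  · exact measurable_pi_apply _

theorem measurableSet_initSeg (T : ℕ) (P : List Bool → Prop) :
    MeasurableSet {X : Cantor | P (initSeg X T)} := by
  have hT : Measurable fun (X : Cantor) (i : Fin T) => X i :=
    measurable_pi_iff.2 fun i => measurable_pi_apply (i : ℕ)
  convert hT (MeasurableSet.of_discrete (s := {f : Fin T → Bool | P (List.ofFn f)})) using 1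
  ext X
  have hX : List.ofFn (fun i : Fin T => X i) = initSeg X T :=
    List.ext_getElem (by simp) (by simp [initSeg])
  simp only [Set.mem_ofPred_eq, Set.mem_preimage, hX]

theorem measurable_digits : Measurable digits := by
  refine measurable_pi_iff.2 fun n => ?_
  have hfloor : Measurable fun x : ℝ => ⌊x * 2 ^ (n + 1)⌋ :=
    Int.measurable_floor.comp (measurable_id.mul_const _)
  exact (Measurable.of_discrete (f := fun z : ℤ => decide (z % 2 = 1))).comp hfloor

theorem mu_apply {S : Set Cantor} (hS : MeasurableSet S) :
    mu S = volume (digits ⁻¹' S ∩ Set.Ico (0 : ℝ) 1) := by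
  rw [mu, Measure.map_apply measurable_digits hS, Measure.restrict_apply (measurable_digits hS)]

instance : IsProbabilityMeasure mu :=
  ⟨by rw [mu_apply MeasurableSet.univ]; simp⟩

/-- The number with binary notation `τ`, most significant bit first. -/
def binaryValue (τ : List Bool) : ℕ := τ.foldl (fun a b => Nat.bit b a) 0

@[fun_prop] theorem computable_binaryValue {α : Type*} [Primcodable α] {f : α → List Bool}
    (hf : Computable f) : Computable fun x => binaryValue (f x) :=
  (Primrec.list_foldl (h := fun _ x => Nat.bit x.2 x.1) Primrec.id (Primrec.const 0)
    (Primrec.cond (Primrec.snd.comp Primrec.snd)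
      (Primrec.nat_double_succ.comp (Primrec.fst.comp Primrec.snd))
      (Primrec.nat_double.comp (Primrec.fst.comp Primrec.snd))).to₂).to_comp.comp hf

theorem binaryValue_replicate_false (d : ℕ) : binaryValue (List.replicate d false) = 0 := by
  induction d with
  | zero => rfl
  | succ d ih => rwa [binaryValue, List.replicate_succ, List.foldl_cons]

theorem binaryValue_append_singleton (τ : List Bool) (b : Bool) :
    binaryValue (τ ++ [b]) = Nat.bit b (binaryValue τ) := by
  simp [binaryValue]

theorem binaryValue_lt (τ : List Bool) : binaryValue τ < 2 ^ τ.length := by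
  induction τ using List.reverseRecOn with
  | nil => simp [binaryValue]
  | append_singleton l b ih =>
    rw [binaryValue_append_singleton, List.length_append, List.length_singleton]
    exact Nat.bit_lt_two_pow_succ_iff.2 ih

theorem binaryValue_inj {σ τ : List Bool} (hl : σ.length = τ.length)
    (h : binaryValue σ = binaryValue τ) : σ = τ := by
  induction σ using List.reverseRecOn generalizing τ with
  | nil => exact (List.length_eq_zero_iff.1 hl.symm).symm
  | append_singleton l b ih =>
    rcases List.eq_nil_or_concat τ with rfl | ⟨l', b', rfl⟩
    · simp at hl
    · rw [List.concat_eq_append] at h hl ⊢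
      rw [binaryValue_append_singleton, binaryValue_append_singleton] at h
      have hb : b = b' := by simpa using congrArg (Nat.testBit · 0) h
      rw [hb, ih (by simpa using hl) (by simpa using congrArg Nat.div2 h)]

/-- The `T`-bit binary notation of `j`, most significant bit first. -/
def binaryString (T j : ℕ) : List Bool :=
  (List.range T).map fun i => j / 2 ^ (T - 1 - i) % 2 == 1

@[fun_prop] theorem computable_binaryString {α : Type*} [Primcodable α] {f g : α → ℕ}
    (hf : Computable f) (hg : Computable g) : Computable fun x => binaryString (f x) (g x) := by
  unfold binaryString
  fun_prop

section Digits

variable {x : ℝ} (hx : 0 ≤ x)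
include hx

theorem digits_apply (n : ℕ) : digits x n = (⌊x * 2 ^ (n + 1)⌋₊ % 2 == 1) := by
  rw [Bool.eq_iff_iff, digits, ← Int.natCast_floor_eq_floor (by positivity), decide_eq_true_iff,
    beq_iff_eq]
  omega

omit hx in
theorem floor_mul_two_pow_add (n k : ℕ) : ⌊x * 2 ^ (n + k)⌋₊ / 2 ^ k = ⌊x * 2 ^ n⌋₊ := by
  rw [← Nat.floor_div_natCast, pow_add, Nat.cast_pow, Nat.cast_ofNat, ← mul_assoc,
    mul_div_cancel_right₀ _ (by positivity)]

theorem initSeg_digits (T : ℕ) : initSeg (digits x) T = binaryString T ⌊x * 2 ^ T⌋₊ := by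
  refine List.map_congr_left fun i hi => ?_
  rw [digits_apply hx, ← floor_mul_two_pow_add (i + 1) (T - 1 - i),
    show i + 1 + (T - 1 - i) = T by have := List.mem_range.1 hi; omega]

theorem binaryValue_initSeg_digits (h1 : x < 1) (n : ℕ) :
    binaryValue (initSeg (digits x) n) = ⌊x * 2 ^ n⌋₊ := by
  induction n with
  | zero => rw [pow_zero, mul_one, Nat.floor_eq_zero.2 h1]; rfl
  | succ n ih =>
    rw [initSeg_succ, binaryValue_append_singleton, ih, digits_apply hx,
      ← floor_mul_two_pow_add n 1, pow_one, Nat.bit_val]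
    rcases Nat.mod_two_eq_zero_or_one ⌊x * 2 ^ (n + 1)⌋₊ with h | h <;> simp [h] <;> omega

theorem extends_digits_iff (h1 : x < 1) :
    Extends (digits x) π ↔ ⌊x * 2 ^ π.length⌋₊ = binaryValue π := by
  rw [← binaryValue_initSeg_digits hx h1]
  exact ⟨fun h => by rw [h], fun h => binaryValue_inj (by simp) h⟩

theorem floor_mul_two_pow_eq_iff (T j : ℕ) :
    ⌊x * 2 ^ T⌋₊ = j ↔ x ∈ Set.Ico ((j : ℝ) / 2 ^ T) ((j + 1) / 2 ^ T) := by
  rw [Nat.floor_eq_iff (by positivity), Set.mem_Ico, div_le_iff₀ (by positivity),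
    lt_div_iff₀ (by positivity)]

end Digits

theorem shift_digits (x : ℝ) (d : ℕ) (j : ℤ) :
    shift d (digits x) = digits (x * 2 ^ d - j) := by
  funext n
  have hfloor : ⌊(x * 2 ^ d - j) * 2 ^ (n + 1)⌋ = ⌊x * 2 ^ (n + d + 1)⌋ - 2 * (j * 2 ^ n) := by
    rw [← Int.floor_sub_intCast]
    push_cast
    ring_nf
  rw [shift, digits, digits, hfloor, Bool.eq_iff_iff, decide_eq_true_iff, decide_eq_true_iff]
  omega

theorem preimage_digits_initSeg (T : ℕ) (P : List Bool → Prop) :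
    digits ⁻¹' {X | P (initSeg X T)} ∩ Set.Ico (0 : ℝ) 1 =
      ⋃ j ∈ (Finset.range (2 ^ T)).filter fun j => P (binaryString T j),
        Set.Ico ((j : ℝ) / 2 ^ T) ((j + 1) / 2 ^ T) := by
  ext x
  simp only [Set.mem_inter_iff, Set.mem_preimage, Set.mem_iUnion, Finset.mem_filter,
    Finset.mem_range, exists_prop, Set.mem_ofPred_eq]
  constructor
  · rintro ⟨hP, h0, h1⟩
    refine ⟨⌊x * 2 ^ T⌋₊, ⟨?_, initSeg_digits h0 T ▸ hP⟩, (floor_mul_two_pow_eq_iff h0 T _).1 rfl⟩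
    rw [Nat.floor_lt (by positivity)]
    push_cast
    exact mul_lt_of_lt_one_left (by positivity) h1
  · rintro ⟨j, ⟨hj, hP⟩, h⟩
    have h0 : 0 ≤ x := le_trans (by positivity) h.1
    refine ⟨?_, h0, h.2.trans_le ?_⟩
    · rwa [initSeg_digits h0, (floor_mul_two_pow_eq_iff h0 T j).2 h]
    · rw [div_le_one (by positivity)]
      exact_mod_cast hj

theorem mu_initSeg (T : ℕ) (P : List Bool → Prop) :
    mu {X | P (initSeg X T)} = ENNReal.ofReal
      (((Finset.range (2 ^ T)).filter fun j => P (binaryString T j)).card / 2 ^ T) := by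
  rw [mu_apply (measurableSet_initSeg T P), preimage_digits_initSeg, measure_biUnion_finset]
  · have hvol (j : ℕ) : volume (Set.Ico ((j : ℝ) / 2 ^ T) ((j + 1) / 2 ^ T)) =
        ENNReal.ofReal (1 / 2 ^ T) := by
      rw [Real.volume_Ico, ← sub_div, add_sub_cancel_left]
    simp only [hvol, Finset.sum_const, nsmul_eq_mul]
    rw [← ENNReal.ofReal_natCast, ← ENNReal.ofReal_mul (by positivity), mul_one_div]
  · refine fun i _ j _ hij => Set.disjoint_left.2 fun x hi hj => hij ?_
    have h0 : 0 ≤ x := le_trans (by positivity) hi.1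
    rw [← (floor_mul_two_pow_eq_iff h0 T i).2 hi, ← (floor_mul_two_pow_eq_iff h0 T j).2 hj]
  · exact fun _ _ => measurableSet_Ico

theorem digits_mem_cylinder_iff (S : Set Cantor) (x : ℝ) :
    ((Extends (digits x) π ∧ shift π.length (digits x) ∈ S) ∧ x ∈ Set.Ico (0 : ℝ) 1) ↔
      digits (x * 2 ^ π.length - binaryValue π) ∈ S ∧
        x * 2 ^ π.length - binaryValue π ∈ Set.Ico (0 : ℝ) 1 := by
  have hp : (0 : ℝ) < 2 ^ π.length := by positivity
  have hv : (binaryValue π : ℝ) + 1 ≤ 2 ^ π.length := by exact_mod_cast binaryValue_lt π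
  have hshift := shift_digits x π.length (binaryValue π)
  rw [Int.cast_natCast] at hshift
  rw [hshift, Set.mem_Ico, Set.mem_Ico]
  constructor
  · rintro ⟨⟨hπ, hS⟩, h0, h1⟩
    rw [extends_digits_iff h0 h1, Nat.floor_eq_iff (by positivity)] at hπ
    exact ⟨hS, by linarith, by linarith⟩
  · rintro ⟨hS, h0, h1⟩
    have hxp : 0 ≤ x * 2 ^ π.length := by linarith [(binaryValue π).cast_nonneg (α := ℝ)]
    have hx0 : 0 ≤ x := nonneg_of_mul_nonneg_left hxp hp
    have hx1 : x < 1 := by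
      by_contra hc
      nlinarith
    refine ⟨⟨?_, hS⟩, hx0, hx1⟩
    rw [extends_digits_iff hx0 hx1, Nat.floor_eq_iff (by positivity)]
    exact ⟨by linarith, by linarith⟩

theorem mu_extends_shift (π : List Bool) {S : Set Cantor} (hS : MeasurableSet S) :
    mu {X | Extends X π ∧ shift π.length X ∈ S} =
      ENNReal.ofReal ((2 : ℝ)⁻¹ ^ π.length) * mu S := by
  have hm : MeasurableSet {X | Extends X π ∧ shift π.length X ∈ S} :=
    (measurableSet_initSeg π.length (· = π)).inter (measurable_shift _ hS)
  have hset : digits ⁻¹' {X | Extends X π ∧ shift π.length X ∈ S} ∩ Set.Ico (0 : ℝ) 1 =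
      (· * 2 ^ π.length) ⁻¹' ((· + -(binaryValue π : ℝ)) ⁻¹'
        (digits ⁻¹' S ∩ Set.Ico (0 : ℝ) 1)) := by
    ext x
    simp only [Set.mem_preimage, ← sub_eq_add_neg]
    exact digits_mem_cylinder_iff S x
  rw [mu_apply hm, mu_apply hS, hset, Real.volume_preimage_mul_right (by positivity),
    measure_preimage_add_right, abs_of_pos (by positivity), inv_pow]

end Measure

/-! ### Effective `Π₂` classes and their measures -/

section PiTwo

open Filter Topology

/-- The class of the `X` that for every `k` have an initial segment satisfying `P k`. For
computable `P` these are exactly the `Π⁰₂` classes. -/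
def piTwoClass (P : ℕ → List Bool → Bool) : Set Cantor := {X | ∀ k, ∃ T, P k (initSeg X T) = true}

theorem measurableSet_piTwoClass (P : ℕ → List Bool → Bool) : MeasurableSet (piTwoClass P) := by
  have h : piTwoClass P = ⋂ k, ⋃ T, {X | P k (initSeg X T) = true} := by
    ext X
    simp [piTwoClass]
  rw [h]
  exact .iInter fun k => .iUnion fun T => measurableSet_initSeg T (P k · = true)

/-- Whether each of the conditions `P 0, …, P k` holds of some prefix of `τ`. -/
def meetsUpTo (P : ℕ → List Bool → Bool) (k : ℕ) (τ : List Bool) : Bool :=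
  (List.range (k + 1)).all fun i => (List.range (τ.length + 1)).any fun T => P i (τ.take T)

theorem meetsUpTo_initSeg {P : ℕ → List Bool → Bool} {k T : ℕ} {X : Cantor} :
    meetsUpTo P k (initSeg X T) = true ↔ ∀ i ≤ k, ∃ S ≤ T, P i (initSeg X S) = true := by
  simp only [meetsUpTo, List.all_eq_true, List.any_eq_true, List.mem_range, length_initSeg,
    Nat.lt_succ_iff]
  exact forall₂_congr fun i _ => exists_congr fun S => and_congr_right fun hS => by
    rw [take_initSeg X hS]

theorem monotone_meetsUpTo_initSeg (P : ℕ → List Bool → Bool) (k : ℕ) :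
    Monotone fun T => {X | meetsUpTo P k (initSeg X T) = true} := fun _ _ h _ hX =>
  meetsUpTo_initSeg.2 fun i hi =>
    (meetsUpTo_initSeg.1 hX i hi).imp fun _ hR => ⟨hR.1.trans h, hR.2⟩

theorem exists_meetsUpTo_initSeg {P : ℕ → List Bool → Bool} {k : ℕ} {X : Cantor} :
    (∃ T, meetsUpTo P k (initSeg X T) = true) ↔ ∀ i ≤ k, ∃ T, P i (initSeg X T) = true := by
  simp only [meetsUpTo_initSeg]
  refine ⟨fun ⟨T, h⟩ i hi => (h i hi).imp fun _ => And.right, fun h => ?_⟩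
  choose! f hf using h
  exact ⟨(Finset.range (k + 1)).sup f, fun i hi =>
    ⟨f i, Finset.le_sup (Finset.mem_range_succ_iff.2 hi), hf i hi⟩⟩

theorem computable_meetsUpTo {P : ℕ → ℕ → List Bool → Bool}
    (hP : Computable fun x : ℕ × ℕ × List Bool => P x.1 x.2.1 x.2.2) :
    Computable fun x : ℕ × ℕ × List Bool => meetsUpTo (P x.1) x.2.1 x.2.2 := by
  have h := hP.comp (g := fun x : ((ℕ × ℕ × List Bool) × ℕ) × ℕ =>
    (x.1.1.1, x.1.2, x.1.1.2.2.take x.2)) (by fun_prop)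
  exact computable_list_all_range (by fun_prop) (computable_list_any_range (by fun_prop) h)

/-- The open superset of `piTwoClass P` given by its first `k + 1` conditions. -/
def piTwoOpen (P : ℕ → List Bool → Bool) (k : ℕ) : Set Cantor :=
  ⋃ T, {X | meetsUpTo P k (initSeg X T) = true}

theorem mem_piTwoOpen {P : ℕ → List Bool → Bool} {k : ℕ} {X : Cantor} :
    X ∈ piTwoOpen P k ↔ ∀ i ≤ k, ∃ T, P i (initSeg X T) = true :=
  Set.mem_iUnion.trans exists_meetsUpTo_initSeg

theorem antitone_piTwoOpen (P : ℕ → List Bool → Bool) : Antitone (piTwoOpen P) :=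
  fun _ _ h _ hX => mem_piTwoOpen.2 fun i hi => mem_piTwoOpen.1 hX i (hi.trans h)

theorem iInter_piTwoOpen (P : ℕ → List Bool → Bool) : ⋂ k, piTwoOpen P k = piTwoClass P := by
  ext X
  simp only [Set.mem_iInter, mem_piTwoOpen]
  exact ⟨fun h k => h k k le_rfl, fun h _ i _ => h i⟩

theorem isLUB_muR_meetsUpTo (P : ℕ → List Bool → Bool) (k : ℕ) :
    IsLUB (Set.range fun T => muR {X | meetsUpTo P k (initSeg X T) = true})
      (muR (piTwoOpen P k)) :=
  isLUB_of_tendsto_atTop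
    (fun _ _ h => ENNReal.toReal_mono (measure_ne_top _ _)
      (measure_mono (monotone_meetsUpTo_initSeg P k h)))
    ((ENNReal.tendsto_toReal (measure_ne_top _ _)).comp
      (tendsto_measure_iUnion_atTop (monotone_meetsUpTo_initSeg P k)))

theorem antitone_muR_piTwoOpen (P : ℕ → List Bool → Bool) :
    Antitone fun k => muR (piTwoOpen P k) := fun _ _ h =>
  ENNReal.toReal_mono (measure_ne_top _ _) (measure_mono (antitone_piTwoOpen P h))

theorem isGLB_muR_piTwoOpen (P : ℕ → List Bool → Bool) :
    IsGLB (Set.range fun k => muR (piTwoOpen P k)) (muR (piTwoClass P)) := by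
  refine isGLB_of_tendsto_atTop (antitone_muR_piTwoOpen P) ?_
  rw [← iInter_piTwoOpen]
  refine (ENNReal.tendsto_toReal (measure_ne_top _ _)).comp (tendsto_measure_iInter_atTop
    (fun k => ?_) (antitone_piTwoOpen P) ⟨0, measure_ne_top _ _⟩)
  exact (MeasurableSet.iUnion fun T =>
    measurableSet_initSeg T (meetsUpTo P k · = true)).nullMeasurableSet

theorem antitone_ceil_div_two_pow {x : ℕ → ℝ} (hx : Antitone x) :
    Antitone fun k => (⌈x k * 2 ^ k⌉₊ : ℝ) / 2 ^ k := by
  refine antitone_nat_of_succ_le fun k => ?_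
  have hstep : x (k + 1) * 2 ^ (k + 1) ≤ (⌈x k * 2 ^ k⌉₊ * 2 : ℕ) := by
    have hk : (0 : ℝ) < 2 ^ k := by positivity
    have := mul_le_mul_of_nonneg_right (hx (Nat.le_succ k)) hk.le
    push_cast
    rw [pow_succ, ← mul_assoc]
    linarith [Nat.le_ceil (x k * 2 ^ k)]
  have hceil : (⌈x (k + 1) * 2 ^ (k + 1)⌉₊ : ℝ) ≤ ⌈x k * 2 ^ k⌉₊ * 2 := by
    exact_mod_cast Nat.cast_le.2 (Nat.ceil_le.2 hstep)
  rw [pow_succ, ← div_div, div_right_comm]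
  gcongr
  rw [div_le_iff₀ two_pos]
  exact hceil

theorem isGLB_ceil_div_two_pow {x : ℕ → ℝ} {l : ℝ} (hx0 : ∀ k, 0 ≤ x k) (hx : Antitone x)
    (hl : IsGLB (Set.range x) l) :
    IsGLB (Set.range fun k => (⌈x k * 2 ^ k⌉₊ : ℝ) / 2 ^ k) l := by
  refine isGLB_of_tendsto_atTop (antitone_ceil_div_two_pow hx) ?_
  have hlim := tendsto_atTop_isGLB hx hl
  have hpow : Tendsto (fun k : ℕ => (2⁻¹ : ℝ) ^ k) atTop (𝓝 0) :=
    tendsto_pow_atTop_nhds_zero_of_lt_one (by norm_num) (by norm_num)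
  refine tendsto_of_tendsto_of_tendsto_of_le_of_le hlim (by simpa using hlim.add hpow)
    (fun k => ?_) (fun k => ?_)
  · rw [le_div_iff₀ (by positivity)]
    exact Nat.le_ceil _
  · rw [div_le_iff₀ (by positivity), add_mul, inv_mul_cancel₀ (by positivity)]
    exact (Nat.ceil_lt_add_one (mul_nonneg (hx0 k) (by positivity))).le

/-- The measure of the cylinders of length `T` satisfying `P`, in units of `2⁻ᵏ`, rounded up. The
rounding turns increasing approximations to the measure of an open class into a bounded sequence of
natural numbers, which is eventually constant. -/
def ceilMeasure (P : List Bool → Bool) (k T : ℕ) : ℕ :=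
  (2 ^ k * (List.range (2 ^ T)).countP (fun j => P (binaryString T j)) + (2 ^ T - 1)) / 2 ^ T

theorem ceilMeasure_eq (P : List Bool → Bool) (k T : ℕ) :
    ceilMeasure P k T = ⌈muR {X | P (initSeg X T) = true} * 2 ^ k⌉₊ := by
  have hcount : (List.range (2 ^ T)).countP (fun j => P (binaryString T j)) =
      ((Finset.range (2 ^ T)).filter fun j => P (binaryString T j) = true).card := by
    rw [List.countP_eq_length_filter, Finset.card_def, Finset.filter_val, Finset.range_val,
      Multiset.range, Multiset.filter_coe, Multiset.coe_card]
    simp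
  refine eq_of_forall_ge_iff fun m => ?_
  rw [ceilMeasure, hcount, Nat.ceil_le, muR, mu_initSeg T (P · = true),
    ENNReal.toReal_ofReal (by positivity), div_mul_eq_mul_div, div_le_iff₀ (by positivity),
    Nat.div_le_iff_le_mul_add_pred (by positivity), mul_comm (2 ^ T) m, mul_comm (2 ^ k),
    Nat.add_le_add_iff_right]
  norm_cast
  convert Iff.rfl

theorem computable_ceilMeasure {α : Type*} [Primcodable α] {Q : α → List Bool → Bool}
    {k T : α → ℕ} (hQ : Computable fun x : α × List Bool => Q x.1 x.2) (hk : Computable k)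
    (hT : Computable T) : Computable fun x => ceilMeasure (Q x) (k x) (T x) := by
  have h := hQ.comp (g := fun x : α × ℕ => (x.1, binaryString (T x.1) x.2)) (by fun_prop)
  have : Computable fun x => (List.range (2 ^ T x)).countP fun j =>
      Q x (binaryString (T x) j) :=
    computable_list_countP_range (p := fun x j => Q x (binaryString (T x) j)) (by fun_prop) h
  unfold ceilMeasure
  fun_prop

theorem iSup_ceilMeasure_meetsUpTo (P : ℕ → List Bool → Bool) (k : ℕ) :
    BddAbove (Set.range fun T => ceilMeasure (meetsUpTo P k) k T) ∧
      ⨆ T, ceilMeasure (meetsUpTo P k) k T = ⌈muR (piTwoOpen P k) * 2 ^ k⌉₊ := by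
  have hle (m : ℕ) : (∀ T, ceilMeasure (meetsUpTo P k) k T ≤ m) ↔
      ⌈muR (piTwoOpen P k) * 2 ^ k⌉₊ ≤ m := by
    simp only [ceilMeasure_eq, Nat.ceil_le, ← le_div_iff₀ (pow_pos two_pos k : (0 : ℝ) < 2 ^ k)]
    rw [isLUB_le_iff (isLUB_muR_meetsUpTo P k), mem_upperBounds, Set.forall_mem_range]
  have hbdd : BddAbove (Set.range fun T => ceilMeasure (meetsUpTo P k) k T) :=
    ⟨_, Set.forall_mem_range.2 ((hle _).2 le_rfl)⟩
  exact ⟨hbdd, eq_of_forall_ge_iff fun m => (ciSup_le_iff hbdd).trans (hle m)⟩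

theorem exists_limitComputable_isGLB_muR_piTwoClass {P : ℕ → ℕ → List Bool → Bool}
    (hP : Computable fun x : ℕ × ℕ × List Bool => P x.1 x.2.1 x.2.2) :
    ∃ a : ℕ × ℕ → ℚ, LimitComputable a ∧ ∀ e, Antitone (fun k => a (e, k)) ∧
      IsGLB (Set.range fun k => (a (e, k) : ℝ)) (muR (piTwoClass (P e))) := by
  have hsup (e k : ℕ) := iSup_ceilMeasure_meetsUpTo (P e) k
  have hcomp : Computable fun x : (ℕ × ℕ) × ℕ =>
      ceilMeasure (meetsUpTo (P x.1.1) x.1.2) x.1.2 x.2 := by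
    have h := (computable_meetsUpTo hP).comp (g := fun x : ((ℕ × ℕ) × ℕ) × List Bool =>
      (x.1.1.1, x.1.1.2, x.2)) (by fun_prop)
    exact computable_ceilMeasure (Q := fun x : (ℕ × ℕ) × ℕ => meetsUpTo (P x.1.1) x.1.2) h
      (by fun_prop) (by fun_prop)
  have hnum : LimitComputable fun x : ℕ × ℕ => ⨆ T, ceilMeasure (meetsUpTo (P x.1) x.2) x.2 T :=
    limitComputable_iSup hcomp (fun x S T h => by
      simp only [ceilMeasure_eq]
      exact Nat.ceil_mono (mul_le_mul_of_nonneg_right (ENNReal.toReal_mono (measure_ne_top _ _)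
        (measure_mono (monotone_meetsUpTo_initSeg _ _ h))) (by positivity)))
      fun x => (hsup x.1 x.2).1
  refine ⟨fun x => ((⨆ T, ceilMeasure (meetsUpTo (P x.1) x.2) x.2 T : ℕ) : ℚ) / 2 ^ x.2,
    limitComputable_comp₂ (f := fun (m k : ℕ) => (m : ℚ) / 2 ^ k)
      (computable_rat_div_two_pow (by fun_prop) (by fun_prop)) hnum
      (limitComputable_of_computable (by fun_prop)), fun e => ⟨fun k l h => ?_, ?_⟩⟩
  · have := antitone_ceil_div_two_pow (antitone_muR_piTwoOpen (P e)) h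
    simp only [(hsup _ _).2]
    rw [← Rat.cast_le (K := ℝ)]
    push_cast
    exact this
  · simp only [(hsup _ _).2, Rat.cast_div, Rat.cast_natCast, Rat.cast_pow, Rat.cast_ofNat]
    exact isGLB_ceil_div_two_pow (fun _ => ENNReal.toReal_nonneg) (antitone_muR_piTwoOpen (P e))
      (isGLB_muR_piTwoOpen (P e))

end PiTwo

/-! ### The infinitude class of a machine -/

section Infinitude

open Filter Encodable

theorem rfindOpt_eq {f : ℕ → Option ℕ} {p : Part ℕ} (hsound : ∀ k, ∀ m ∈ f k, m ∈ p)
    (hcomplete : ∀ m ∈ p, ∃ k, m ∈ f k) : Nat.rfindOpt f = p := by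
  ext m
  refine ⟨fun h => ?_, fun h => ?_⟩
  · obtain ⟨k, hk⟩ := Nat.rfindOpt_spec h
    exact hsound k m hk
  · obtain ⟨k, hk⟩ := hcomplete m h
    obtain ⟨m', hm'⟩ := Part.dom_iff_mem.1 (Nat.rfindOpt_dom.2 ⟨k, m, hk⟩)
    obtain ⟨k', hk'⟩ := Nat.rfindOpt_spec hm'
    rwa [Part.mem_unique h (hsound k' m' hk')]

/-- The output, if any, that the machine `c` yields on input `n` within `|τ|` steps when only the
bits in `τ` of its oracle are available. -/
noncomputable def runString (c : CodeO) (τ : List Bool) (n : ℕ) : Option ℕ :=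
  run c (τ.map fun b => bif b then 1 else 0) n

@[fun_prop] theorem computable_runString {α : Type*} [Primcodable α] {c : α → CodeO}
    {τ : α → List Bool} {n : α → ℕ} (hc : Computable c) (hτ : Computable τ) (hn : Computable n) :
    Computable fun x => runString (c x) (τ x) (n x) := by
  unfold runString
  fun_prop

theorem runString_initSeg (c : CodeO) (X : Cantor) (k n : ℕ) :
    runString c (initSeg X k) n = run c ((List.range k).map (oX X)) n := by
  rw [runString, initSeg, List.map_map]
  rfl

theorem evalO_eq_rfindOpt (X : Cantor) (c : CodeO) (n : ℕ) :
    evalO X c n = Nat.rfindOpt fun k => runString c (initSeg X k) n := by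
  simp only [runString_initSeg]
  exact (rfindOpt_eq (fun _ _ => mem_eval_of_mem_run)
    fun _ h => (frequently_mem_run h).exists).symm

/-- The conditions that define `INF u`: the `k`-th one asks for some `n > k` and some prefix of
length `i` on which `u` halts at `n`. The pair `(n, i)` is read off the length of the string. -/
noncomputable def infTest (u : CodeO) (k : ℕ) (τ : List Bool) : Bool :=
  k.blt τ.length.unpair.1 &&
    (runString u (τ.take τ.length.unpair.2) τ.length.unpair.1).isSome

theorem INF_eq_piTwoClass (u : CodeO) : INF u = piTwoClass (infTest u) := by
  ext X
  have htake (n i : ℕ) :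
      (initSeg X (Nat.pair n i)).take i = initSeg X i := take_initSeg X (Nat.right_le_pair n i)
  have htest (k : ℕ) : (∃ T, infTest u k (initSeg X T) = true) ↔ ∃ n ∈ domSet u X, k < n := by
    refine (Equiv.exists_congr_left Nat.pairEquiv.symm).trans ?_
    simp [infTest, htake, domSet, evalO_eq_rfindOpt, Nat.rfindOpt_dom,
      Option.isSome_iff_exists, and_comm]
  simp only [INF, Set.mem_ofPred_eq, piTwoClass, htest]
  exact Set.infinite_iff_exists_gt

theorem measurableSet_INF (u : CodeO) : MeasurableSet (INF u) :=
  INF_eq_piTwoClass u ▸ measurableSet_piTwoClass _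

/-- The conditions `P`, shifted by one to make room for the condition of not extending `π`. -/
def diffTest (P : ℕ → List Bool → Bool) (π : List Bool) (k : ℕ) (τ : List Bool) : Bool :=
  bif k == 0 then π.length.ble τ.length && !(encode (τ.take π.length) == encode π)
  else P (k - 1) τ

theorem piTwoClass_diff_extends (P : ℕ → List Bool → Bool) (π : List Bool) :
    piTwoClass P \ {X | Extends X π} = piTwoClass (diffTest P π) := by
  ext X
  have hzero : (∃ T, diffTest P π 0 (initSeg X T) = true) ↔ ¬ Extends X π := by
    simp only [diffTest, Extends]
    refine ⟨fun ⟨T, hT⟩ => ?_, fun h => ⟨π.length, ?_⟩⟩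
    · have hlen : π.length ≤ T := by simp_all
      simpa [hlen, take_initSeg X hlen] using hT
    · simpa [take_initSeg X le_rfl] using h
  have hsucc (k : ℕ) : diffTest P π (k + 1) = P k := by
    funext τ
    simp [diffTest]
  rw [piTwoClass, piTwoClass, Set.mem_sdiff, and_comm]
  simp only [Set.mem_ofPred_eq]
  rw [← Nat.and_forall_add_one (p := fun k => ∃ T, diffTest P π k (initSeg X T) = true), hzero]
  simp only [hsucc]

theorem exists_limitComputable_isGLB_muR_INF_diff (u : CodeO) {π : ℕ → List Bool}
    (hπ : Computable π) : ∃ a : ℕ × ℕ → ℚ, LimitComputable a ∧ ∀ e,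
      Antitone (fun k => a (e, k)) ∧ IsGLB (Set.range fun k => (a (e, k) : ℝ))
        (muR (INF u \ {X | Extends X (π e)})) := by
  simp only [INF_eq_piTwoClass, piTwoClass_diff_extends]
  refine exists_limitComputable_isGLB_muR_piTwoClass
    (P := fun e => diffTest (infTest u) (π e)) ?_
  unfold diffTest infTest
  fun_prop

theorem rightCeIn_muR_INF (u : CodeO) : RightCeIn (iterJump 1) (muR (INF u)) := by
  obtain ⟨a, ha, hglb⟩ := exists_limitComputable_isGLB_muR_piTwoClass (P := fun _ => infTest u)
    (by unfold infTest; fun_prop)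
  rw [INF_eq_piTwoClass]
  exact rightCeIn_iterJump_one_of_isGLB
    (limitComputable_comp_computable ha (g := fun k => (0, k)) (by fun_prop)) (hglb 0).2

end Infinitude

/-! ### Every `∅'`-right-c.e. real in `[0, 1]` is the measure of a `Π₂` class -/

section Cut

open Filter Topology

/-- The conditions that define the class of the binary expansions below all the limits of
`B (0, ·), B (1, ·), …`: with `x = (N, s)`, the `x`-th one asks that at some stage `T ≥ s` the first
`T` bits do not exceed `B (N, T)`. -/
def cutTest (B : ℕ × ℕ → ℚ) (x : ℕ) (τ : List Bool) : Bool :=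
  x.unpair.2.ble τ.length &&
    !Rat.blt (B (x.unpair.1, τ.length)) ((binaryValue τ : ℚ) / 2 ^ τ.length)

theorem computable_cutTest {α : Type*} [Primcodable α] {B : α × ℕ × ℕ → ℚ} (hB : Computable B) :
    Computable fun x : α × ℕ × List Bool => cutTest (fun y => B (x.1, y)) x.2.1 x.2.2 := by
  have hdiv : Computable fun x : α × ℕ × List Bool =>
      (binaryValue x.2.2 : ℚ) / 2 ^ x.2.2.length :=
    computable_rat_div_two_pow (by fun_prop) (by fun_prop)
  have := computable_rat_blt (hB.comp (g := fun x : α × ℕ × List Bool =>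
    (x.1, x.2.1.unpair.1, x.2.2.length)) (by fun_prop)) hdiv
  unfold cutTest
  fun_prop

theorem digits_mem_piTwoClass_cutTest_iff {B : ℕ × ℕ → ℚ} {b : ℕ → ℚ}
    (hB : ∀ N, ∀ᶠ T in atTop, B (N, T) = b N) {y : ℝ} (h0 : 0 ≤ y) (h1 : y < 1) :
    digits y ∈ piTwoClass (cutTest B) ↔ ∀ N, y ≤ b N := by
  have hfreq : digits y ∈ piTwoClass (cutTest B) ↔
      ∀ N, ∃ᶠ T in atTop, (⌊y * 2 ^ T⌋₊ : ℝ) / 2 ^ T ≤ B (N, T) := by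
    have htest (N s T : ℕ) : cutTest B (Nat.pair N s) (initSeg (digits y) T) = true ↔
        s ≤ T ∧ (⌊y * 2 ^ T⌋₊ : ℝ) / 2 ^ T ≤ B (N, T) := by
      have hcast : (⌊y * 2 ^ T⌋₊ : ℚ) / 2 ^ T ≤ B (N, T) ↔
          (⌊y * 2 ^ T⌋₊ : ℝ) / 2 ^ T ≤ B (N, T) := by
        rw [← Rat.cast_le (K := ℝ)]
        push_cast
        rfl
      simp [cutTest, binaryValue_initSeg_digits h0 h1, Bool.eq_false_iff, rat_blt_iff, hcast]
    simp only [piTwoClass, Set.mem_ofPred_eq, frequently_atTop, ← htest]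
    exact (Equiv.forall_congr_left Nat.pairEquiv.symm).trans Prod.forall
  rw [hfreq]
  refine forall_congr' fun N => ?_
  have hlim : Tendsto (fun T : ℕ => (⌊y * 2 ^ T⌋₊ : ℝ) / 2 ^ T) atTop (𝓝 y) :=
    (tendsto_nat_floor_mul_div_atTop h0).comp (tendsto_pow_atTop_atTop_of_one_lt one_lt_two)
  refine ⟨fun h => ?_, fun h => ?_⟩
  · have hb := h.and_eventually (hB N)
    exact le_of_tendsto_of_frequently hlim (hb.mono fun T hT => hT.2 ▸ hT.1)
  · refine ((hB N).mono fun T hT => ?_).frequently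
    rw [hT, div_le_iff₀ (by positivity)]
    exact (Nat.floor_le (by positivity)).trans (mul_le_mul_of_nonneg_right h (by positivity))

theorem muR_eq_of_digits_mem_iff_mem_Icc {S : Set Cantor} (hS : MeasurableSet S) {a b : ℝ}
    (ha : 0 ≤ a) (hab : a ≤ b) (hb : b ≤ 1)
    (h : ∀ y, 0 ≤ y → y < 1 → (digits y ∈ S ↔ y ∈ Set.Icc a b)) : muR S = b - a := by
  have hvol : volume (digits ⁻¹' S ∩ Set.Ico (0 : ℝ) 1) = ENNReal.ofReal (b - a) := by
    refine le_antisymm ?_ ?_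
    · calc volume (digits ⁻¹' S ∩ Set.Ico (0 : ℝ) 1)
        _ ≤ volume (Set.Icc a b) := measure_mono fun y hy => (h y hy.2.1 hy.2.2).1 hy.1
        _ = ENNReal.ofReal (b - a) := Real.volume_Icc
    · calc ENNReal.ofReal (b - a)
        _ = volume (Set.Ico a b) := Real.volume_Ico.symm
        _ ≤ volume (digits ⁻¹' S ∩ Set.Ico (0 : ℝ) 1) := measure_mono fun y hy =>
          have hy0 := ha.trans hy.1
          have hy1 := hy.2.trans_le hb
          ⟨(h y hy0 hy1).2 ⟨hy.1, hy.2.le⟩, hy0, hy1⟩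
  rw [muR, mu_apply hS, hvol, ENNReal.toReal_ofReal (sub_nonneg.2 hab)]

theorem exists_computable_digits_mem_piTwoClass_iff {b : ℕ × ℕ → ℚ} (hb : LimitComputable b) :
    ∃ P : ℕ → ℕ → List Bool → Bool, Computable (fun x : ℕ × ℕ × List Bool => P x.1 x.2.1 x.2.2) ∧
      ∀ e β, IsGLB (Set.range fun N => (b (e, N) : ℝ)) β →
        ∀ y, 0 ≤ y → y < 1 → (digits y ∈ piTwoClass (P e) ↔ y ≤ β) := by
  obtain ⟨B, hB, hlim⟩ := hb
  refine ⟨fun e => cutTest fun y => B ((e, y.1), y.2), ?_, fun e β hβ y hy0 hy1 => ?_⟩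
  · exact computable_cutTest (B := fun y : ℕ × ℕ × ℕ => B ((y.1, y.2.1), y.2.2)) (by fun_prop)
  · rw [digits_mem_piTwoClass_cutTest_iff (fun N => hlim (e, N)) hy0 hy1, le_isGLB_iff hβ,
      mem_lowerBounds, Set.forall_mem_range]

end Cut

/-! ### Machines that act on oracles with a given prefix -/

section Machines

open Encodable

theorem mem_rfindOpt_iff {α : Type*} {f : ℕ → Option α} {a : α} :
    a ∈ Nat.rfindOpt f ↔ ∃ k, a ∈ f k ∧ ∀ j < k, f j = none := by
  simp only [Nat.rfindOpt, Part.mem_bind_iff, Part.mem_ofOption]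
  refine exists_congr fun k => ⟨fun ⟨hk, ha⟩ => ⟨ha, fun j hj => ?_⟩, fun ⟨ha, hlt⟩ => ⟨?_, ha⟩⟩
  · have := Nat.rfind_min hk hj
    simpa using this
  · refine Nat.mem_rfind.2 ⟨?_, fun {j} hj => ?_⟩
    · simp [Option.mem_def.1 ha]
    · simp [hlt j hj]

theorem rfindOpt_congr_of_delay {α : Type*} {f g : ℕ → Option α} {d : ℕ}
    (hnone : ∀ k < d, g k = none) (hadd : ∀ k, g (d + k) = f k) :
    Nat.rfindOpt g = Nat.rfindOpt f := by
  ext a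
  simp only [mem_rfindOpt_iff]
  constructor
  · rintro ⟨k, hk, hlt⟩
    obtain hkd | hkd := lt_or_ge k d
    · simp [hnone k hkd] at hk
    · obtain ⟨k, rfl⟩ := Nat.exists_eq_add_of_le hkd
      exact ⟨k, hadd k ▸ hk, fun j hj => hadd j ▸ hlt (d + j) (by omega)⟩
  · rintro ⟨k, hk, hlt⟩
    refine ⟨d + k, (hadd k).symm ▸ hk, fun j hj => ?_⟩
    obtain hjd | hjd := lt_or_ge j d
    · exact hnone j hjd
    · obtain ⟨j, rfl⟩ := Nat.exists_eq_add_of_le hjd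
      exact (hadd j).trans (hlt j (by omega))

theorem initSeg_prepend_of_le {π : List Bool} {k : ℕ} (Y : Cantor) (h : k ≤ π.length) :
    initSeg (prepend π Y) k = π.take k := by
  rw [← take_initSeg _ h, extends_prepend π Y]

theorem initSeg_prepend_add (π : List Bool) (Y : Cantor) (k : ℕ) :
    initSeg (prepend π Y) (π.length + k) = π ++ initSeg Y k := by
  rw [← List.take_append_drop π.length (initSeg (prepend π Y) (π.length + k)),
    take_initSeg _ (Nat.le_add_right _ _), extends_prepend π Y, drop_initSeg, shift_prepend,
    Nat.add_sub_cancel_left]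

theorem prepend_append (σ π : List Bool) (X : Cantor) :
    prepend (σ ++ π) X = prepend σ (prepend π X) := by
  have h : Extends (prepend σ (prepend π X)) (σ ++ π) := by
    rw [Extends, List.length_append, initSeg_prepend_add, extends_prepend π X]
  have hs : shift (σ ++ π).length (prepend σ (prepend π X)) = X := by
    rw [List.length_append, ← shift_shift, shift_prepend, shift_prepend]
  rw [← prepend_shift h, hs]

/-- The string `1ᵉ0`. -/
def unary (e : ℕ) : List Bool := List.replicate e true ++ [false]

@[fun_prop] theorem computable_unary {α : Type*} [Primcodable α] {f : α → ℕ}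
    (hf : Computable f) : Computable fun x => unary (f x) := by
  have h : (fun x => unary (f x)) = fun x => (List.range (f x)).map (fun _ => true) ++ [false] := by
    simp [unary]
  rw [h]
  fun_prop

theorem idxOf_unary_append (e : ℕ) (τ : List Bool) : (unary e ++ τ).idxOf false = e := by
  simp [unary, List.idxOf_append]

theorem unary_prefix_unary_iff {d e : ℕ} : unary d <+: unary e ↔ d = e := by
  refine ⟨fun ⟨τ, h⟩ => ?_, fun h => h ▸ List.prefix_rfl⟩
  have he := idxOf_unary_append e []
  rwa [List.append_nil, ← h, idxOf_unary_append] at he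

theorem isPrefixFree_range_unary : IsPrefixFree (Set.range unary) := by
  rintro _ ⟨d, rfl⟩ _ ⟨e, rfl⟩ h
  rw [unary_prefix_unary_iff.1 h]

theorem exists_machine_dispatch {G : ℕ → List Bool → ℕ → Option ℕ}
    (hG : Computable fun x : ℕ × List Bool × ℕ => G x.1 x.2.1 x.2.2) :
    ∃ c, ∀ e Y n, evalO (prepend (unary e) Y) c n = Nat.rfindOpt fun k => G e (initSeg Y k) n := by
  have := hG.comp (g := fun x : List Bool × ℕ =>
    (x.1.idxOf false, x.1.drop (x.1.idxOf false + 1), x.2)) (by fun_prop)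
  obtain ⟨c, hc⟩ := exists_machine_search_initSeg (G := fun τ n =>
    bif τ.length.ble (τ.idxOf false) then none
    else G (τ.idxOf false) (τ.drop (τ.idxOf false + 1)) n) (by fun_prop)
  have hlen (e : ℕ) : (unary e).length = e + 1 := by simp [unary]
  refine ⟨c, fun e Y n => (hc _ n).trans
    (rfindOpt_congr_of_delay (d := (unary e).length) (fun k hk => ?_) fun k => ?_)⟩
  · have hidx : ((unary e).take k).idxOf false = k := by
      have hke : k ≤ e := by rw [hlen] at hk; omega
      simp [unary, List.take_append_of_le_length, hke]
    simp [initSeg_prepend_of_le Y hk.le, hidx, Bool.cond_eq_ite, Nat.ble_eq]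
  · have hlt : ¬ (unary e).length + k ≤ e := by rw [hlen]; omega
    simp [initSeg_prepend_add, idxOf_unary_append, ← hlen, hlt, Bool.cond_eq_ite, Nat.ble_eq]

theorem exists_machine_evalO_prepend_unary :
    ∃ u, ∀ (c : CodeO) X n, evalO (prepend (unary c.encode) X) u n = evalO X c n := by
  obtain ⟨u, hu⟩ := exists_machine_dispatch
    (G := fun e τ n => runString (CodeO.ofNat e) τ n) (by fun_prop)
  exact ⟨u, fun c X n => by rw [hu, ofNat_encode, evalO_eq_rfindOpt]⟩

theorem exists_machine_evalO_eq_ite_extends (π : List Bool) (c₀ c₁ : CodeO) :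
    ∃ u, ∀ X n, evalO X u n =
      if Extends X π then evalO (shift π.length X) c₀ n else evalO X c₁ n := by
  obtain ⟨u, hu⟩ := exists_machine_search_initSeg (G := fun τ n =>
    bif τ.length.blt π.length then none
    else bif encode (τ.take π.length) == encode π then runString c₀ (τ.drop π.length) n
    else runString c₁ (τ.take (τ.length - π.length)) n) (by fun_prop)
  refine ⟨u, fun X n => (hu X n).trans ?_⟩
  have htake (k : ℕ) : (encode ((initSeg X (π.length + k)).take π.length) == encode π) =
      decide (Extends X π) := by
    rw [take_initSeg X (Nat.le_add_right _ _), beq_eq_decide, decide_eq_decide, encode_inj, Extends]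
  simp only [evalO_eq_rfindOpt, ← apply_ite Nat.rfindOpt]
  refine rfindOpt_congr_of_delay (d := π.length) (fun k hk => ?_) fun k => ?_
  · simp [hk, Bool.cond_eq_ite, Nat.blt_eq]
  · simp only [htake]
    by_cases hX : Extends X π <;>
      simp [hX, drop_initSeg, take_initSeg, Bool.cond_eq_ite, Nat.blt_eq]

theorem infinite_setOf_forall_le_iff {p : ℕ → Prop} :
    {n | ∀ i ≤ n, p i}.Infinite ↔ ∀ n, p n := by
  rw [Set.infinite_iff_exists_gt]
  exact ⟨fun h n => let ⟨_, hb, hlt⟩ := h n; hb n hlt.le,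
    fun h n => ⟨n + 1, fun i _ => h i, n.lt_succ_self⟩⟩

theorem mem_INF_iff_mem_piTwoClass {P : ℕ → List Bool → Bool} {c : CodeO} {X Y : Cantor}
    (h : ∀ n, evalO X c n =
      Nat.rfindOpt fun k => bif meetsUpTo P n (initSeg Y k) then some 0 else none) :
    X ∈ INF c ↔ Y ∈ piTwoClass P := by
  simp only [INF, domSet, h, rfindOpt_bool_dom, exists_meetsUpTo_initSeg, Set.mem_ofPred_eq,
    piTwoClass]
  exact infinite_setOf_forall_le_iff

theorem exists_machine_INF_eq_piTwoClass {P : ℕ → List Bool → Bool}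
    (hP : Computable fun x : ℕ × List Bool => P x.1 x.2) : ∃ c, INF c = piTwoClass P := by
  have hmeets := computable_meetsUpTo (P := fun _ : ℕ => P) (by fun_prop)
  have h := hmeets.comp (g := fun x : List Bool × ℕ => (0, x.2, x.1)) (by fun_prop)
  obtain ⟨c, hc⟩ := exists_machine_search_initSeg
    (G := fun τ n => bif meetsUpTo P n τ then some 0 else none) (computable_guard h)
  exact ⟨c, Set.ext fun X => mem_INF_iff_mem_piTwoClass (hc X)⟩

theorem exists_machine_prepend_unary_mem_INF_iff {P : ℕ → ℕ → List Bool → Bool}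
    (hP : Computable fun x : ℕ × ℕ × List Bool => P x.1 x.2.1 x.2.2) :
    ∃ c, ∀ e Y, prepend (unary e) Y ∈ INF c ↔ Y ∈ piTwoClass (P e) := by
  have hmeets := computable_meetsUpTo hP
  have h := hmeets.comp (g := fun x : ℕ × List Bool × ℕ => (x.1, x.2.2, x.2.1)) (by fun_prop)
  obtain ⟨c, hc⟩ := exists_machine_dispatch
    (G := fun e τ n => bif meetsUpTo (P e) n τ then some 0 else none) (computable_guard h)
  exact ⟨c, fun e Y => mem_INF_iff_mem_piTwoClass (hc e Y)⟩

end Machines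

/-! ### Avoiding a small open set from above -/

section Avoid

open Filter Topology

/-- One step of `avoid`: when `δ + c` lies in the open interval `I`, lower `δ` until the sum reaches
the left endpoint of `I`. -/
def avoidStep (I : ℚ × ℚ) (c δ : ℚ) : ℚ :=
  bif Rat.blt I.1 (δ + c) && Rat.blt (δ + c) I.2 then I.1 - c else δ

/-- Starting from `r`, push the sum `avoid r I c N + c N` successively below the intervals
`I 0`, `I 1`, …, in which it happens to lie. -/
def avoid (r : ℚ) (I : ℕ → ℚ × ℚ) (c : ℕ → ℚ) (N : ℕ) : ℚ :=
  Nat.rec r (fun n δ => avoidStep (I n) (c n) δ) N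

theorem computable_avoidStep :
    Computable fun x : ((ℚ × ℚ) × ℚ) × ℚ => avoidStep x.1.1 x.1.2 x.2 := by
  have hadd := computable_rat_add (f := fun x : ((ℚ × ℚ) × ℚ) × ℚ => x.2) (g := fun x => x.1.2)
    (by fun_prop) (by fun_prop)
  have hsub := computable_rat_sub (f := fun x : ((ℚ × ℚ) × ℚ) × ℚ => x.1.1.1)
    (g := fun x => x.1.2) (by fun_prop) (by fun_prop)
  exact Computable.cond (computable_and (computable_rat_blt (by fun_prop) hadd)
    (computable_rat_blt hadd (by fun_prop))) hsub (by fun_prop)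

theorem limitComputable_avoid {α : Type*} [Primcodable α] {r : α → ℚ} {I : α × ℕ → ℚ × ℚ}
    {c : α × ℕ → ℚ} (hr : Computable r) (hI : LimitComputable I) (hc : LimitComputable c) :
    LimitComputable fun x : α × ℕ =>
      avoid (r x.1) (fun n => I (x.1, n)) (fun n => c (x.1, n)) x.2 := by
  have hIc := limitComputable_comp_computable (limitComputable_pair hI hc)
    (g := fun x : α × ℕ × ℚ => (x.1, x.2.1)) (by fun_prop)
  have hstep := limitComputable_comp₂ (f := fun (y : (ℚ × ℚ) × ℚ) δ => avoidStep y.1 y.2 δ)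
    (h := fun x : α × ℕ × ℚ => x.2.2) computable_avoidStep hIc
    (limitComputable_of_computable (by fun_prop))
  exact limitComputable_nat_rec (g := r) (h := fun a n δ => avoidStep (I (a, n)) (c (a, n)) δ)
    (limitComputable_of_computable hr) hstep

variable {r : ℚ} {I : ℕ → ℚ × ℚ} {c : ℕ → ℚ}

theorem avoid_succ (N : ℕ) : avoid r I c (N + 1) =
    if (I N).1 < avoid r I c N + c N ∧ avoid r I c N + c N < (I N).2 then (I N).1 - c N
    else avoid r I c N := by
  change avoidStep (I N) (c N) (avoid r I c N) = _
  simp only [avoidStep, Bool.cond_eq_ite, Bool.and_eq_true, rat_blt_iff]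

theorem antitone_avoid : Antitone (avoid r I c) := by
  refine antitone_nat_of_succ_le fun N => ?_
  rw [avoid_succ]
  split_ifs with h
  · linarith [h.1]
  · exact le_rfl

/-- The part of the intervals above `avoid r I c N + c N` pays for the distance travelled. -/
theorem ofReal_sub_avoid_le (hc : Antitone c) (N : ℕ) :
    ENNReal.ofReal (r - avoid r I c N) ≤ volume ((⋃ n, Set.Ioo ((I n).1 : ℝ) (I n).2) ∩
      Set.Ioi ((avoid r I c N + c N : ℚ) : ℝ)) := by
  induction N with
  | zero => simp [avoid]
  | succ N ih =>
    have hanti : avoid r I c (N + 1) + c (N + 1) ≤ avoid r I c N + c N :=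
      add_le_add (antitone_avoid N.le_succ) (hc N.le_succ)
    by_cases h : (I N).1 < avoid r I c N + c N ∧ avoid r I c N + c N < (I N).2
    · have hnext : avoid r I c (N + 1) = (I N).1 - c N := by rw [avoid_succ, if_pos h]
      have hle : avoid r I c (N + 1) + c (N + 1) ≤ (I N).1 := by
        linarith [hc N.le_succ]
      calc ENNReal.ofReal (r - avoid r I c (N + 1))
          ≤ ENNReal.ofReal (r - avoid r I c N) +
              volume (Set.Ioo ((I N).1 : ℝ) (avoid r I c N + c N : ℚ)) := by
            rw [Real.volume_Ioo, hnext]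
            refine (ENNReal.ofReal_le_ofReal ?_).trans ENNReal.ofReal_add_le
            push_cast
            linarith
        _ ≤ volume (((⋃ n, Set.Ioo ((I n).1 : ℝ) (I n).2) ∩
              Set.Ioi ((avoid r I c N + c N : ℚ) : ℝ)) ∪
              Set.Ioo ((I N).1 : ℝ) (avoid r I c N + c N : ℚ)) := by
            rw [measure_union (Set.disjoint_left.2 fun x hx hx' => hx.2.not_gt hx'.2)
              measurableSet_Ioo]
            gcongr
        _ ≤ _ := by
            refine measure_mono (Set.union_subset
              (Set.inter_subset_inter_right _ (Set.Ioi_subset_Ioi (mod_cast hanti)))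
              fun x hx => ⟨Set.mem_iUnion.2 ⟨N, hx.1, hx.2.trans (mod_cast h.2)⟩, ?_⟩)
            exact lt_of_le_of_lt (mod_cast hle) hx.1
    · rw [avoid_succ, if_neg h] at hanti ⊢
      exact ih.trans (measure_mono
        (Set.inter_subset_inter_right _ (Set.Ioi_subset_Ioi (mod_cast hanti))))

theorem avoid_nonneg (hr : 0 ≤ r) (hc : Antitone c)
    (hvol : volume (⋃ n, Set.Ioo ((I n).1 : ℝ) (I n).2) ≤ ENNReal.ofReal r) (N : ℕ) :
    0 ≤ avoid r I c N := by
  have h := (ofReal_sub_avoid_le (r := r) hc N).trans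
    ((measure_mono Set.inter_subset_left).trans hvol)
  rw [ENNReal.ofReal_le_ofReal_iff (mod_cast hr)] at h
  exact_mod_cast (by linarith : (0 : ℝ) ≤ avoid r I c N)

theorem exists_isGLB_avoid_add_notMem (hr : 0 ≤ r) (hc : Antitone c) {γ : ℝ}
    (hγ : IsGLB (Set.range fun N => (c N : ℝ)) γ) (hI : ∀ N, ∃ᶠ M in atTop, I M = I N)
    (hvol : volume (⋃ n, Set.Ioo ((I n).1 : ℝ) (I n).2) ≤ ENNReal.ofReal r) :
    ∃ δ : ℝ, 0 ≤ δ ∧ δ ≤ r ∧ IsGLB (Set.range fun N => (avoid r I c N : ℝ)) δ ∧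
      δ + γ ∉ ⋃ n, Set.Ioo ((I n).1 : ℝ) (I n).2 := by
  have hanti : Antitone fun N => (avoid r I c N : ℝ) :=
    Rat.cast_mono.comp_antitone antitone_avoid
  have hnonneg : ∀ N, 0 ≤ (avoid r I c N : ℝ) := fun N =>
    mod_cast avoid_nonneg hr hc hvol N
  obtain ⟨δ, hδ⟩ := Real.exists_isGLB (Set.range_nonempty fun N => (avoid r I c N : ℝ))
    ⟨0, Set.forall_mem_range.2 hnonneg⟩
  refine ⟨δ, hδ.2 (Set.forall_mem_range.2 hnonneg), hδ.1 ⟨0, rfl⟩, hδ, fun hmem => ?_⟩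
  have hlim := (tendsto_atTop_isGLB hanti hδ).add
    (tendsto_atTop_isGLB (Rat.cast_mono.comp_antitone hc) hγ)
  have hle (N M : ℕ) : δ + γ ≤ avoid r I c N + c M :=
    add_le_add (hδ.1 ⟨N, rfl⟩) (hγ.1 ⟨M, rfl⟩)
  obtain ⟨N, hN⟩ := Set.mem_iUnion.1 hmem
  obtain ⟨M, hMN, hM⟩ := ((hI N).and_eventually (hlim.eventually_lt_const hN.2)).exists
  have hlt := hN.1.trans_le (hle M M)
  have hnext : avoid r I c (M + 1) = (I N).1 - c M := by
    dsimp only [Function.comp_apply] at hM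
    rw [avoid_succ, hMN, if_pos ⟨mod_cast hlt, mod_cast hM⟩]
  have hstep := hle (M + 1) M
  rw [hnext] at hstep
  push_cast at hstep
  linarith [hN.1]

theorem exists_limitComputable_testSet_eq_iUnion {W : Set ℕ} (hW : CeIn (iterJump 1) W) :
    ∃ I : ℕ × ℕ → ℚ × ℚ, LimitComputable I ∧ ∀ i, (∀ N, ∃ᶠ M in atTop, I (i, M) = I (i, N)) ∧
      testSet W i = ⋃ N, Set.Ioo ((I (i, N)).1 : ℝ) (I (i, N)).2 := by
  obtain ⟨p, hp, hpW⟩ := ceIn_iterJump_one_iff.1 hW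
  let J (y : ℕ) : ℚ × ℚ := (Encodable.decode y.unpair.1).getD (0, 0)
  let I (x : ℕ × ℕ) : ℚ × ℚ := bif p (Nat.pair x.1 (Encodable.encode (J x.2.unpair.1)),
    x.2.unpair.1.unpair.2) then J x.2.unpair.1 else (0, 0)
  have hJ : Computable J := by fun_prop
  refine ⟨I, ?_, fun i => ⟨fun N => ?_, ?_⟩⟩
  · exact limitComputable_comp₂ (f := fun (b : Bool) (J : ℚ × ℚ) => bif b then J else (0, 0))
      (by fun_prop) (limitComputable_comp_computable hp (by fun_prop))
      (limitComputable_of_computable (by fun_prop))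
  · refine frequently_atTop.2 fun M => ⟨Nat.pair N.unpair.1 M, Nat.right_le_pair _ _, ?_⟩
    simp only [I, Nat.unpair_pair]
  · ext x
    simp only [Set.mem_iUnion]
    constructor
    · rintro ⟨a, b, hW, hx⟩
      obtain ⟨s, hs⟩ := (hpW _).1 hW
      refine ⟨Nat.pair (Nat.pair (Encodable.encode (a, b)) s) 0, ?_⟩
      simp only [I, J, Nat.unpair_pair, Encodable.encodek, Option.getD_some, hs, cond_true]
      exact hx
    · rintro ⟨N, hx⟩
      rcases hpN : p (Nat.pair i (Encodable.encode (J N.unpair.1)), N.unpair.1.unpair.2) with _ | _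
      · simp [I, hpN] at hx
      · simp only [I, hpN, cond_true] at hx
        generalize J N.unpair.1 = ab at hpN hx
        exact ⟨ab.1, ab.2, (hpW _).2 ⟨_, hpN⟩, hx⟩

end Avoid

/-! ### The infinitude probability is 2-random -/

section Random

variable {u : CodeO}

theorem muR_eq_add_muR_diff_extends {S R : Set Cantor} (hR : MeasurableSet R) {π : List Bool}
    (h : ∀ X, Extends X π → (X ∈ S ↔ shift π.length X ∈ R)) :
    muR S = 2⁻¹ ^ π.length * muR R + muR (S \ {X | Extends X π}) := by
  have hinter : S ∩ {X | Extends X π} = {X | Extends X π ∧ shift π.length X ∈ R} :=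
    Set.ext fun X => and_comm.trans (and_congr_right (h X))
  have hsplit := measureReal_inter_add_sdiff (μ := mu) (s := S)
    (measurableSet_initSeg π.length (· = π))
  change muR (S ∩ {X | Extends X π}) + muR (S \ {X | Extends X π}) = muR S at hsplit
  rw [← hsplit, hinter, muR, mu_extends_shift π hR, ENNReal.toReal_mul,
    ENNReal.toReal_ofReal (by positivity)]
  rfl

theorem exists_machine_muR_eq_of_isGLB {d : ℕ → ℕ} (hd : Computable d) {b : ℕ × ℕ → ℚ}
    (hb : LimitComputable b) : ∃ c : CodeO, ∀ e (δ : ℝ),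
      IsGLB (Set.range fun N => (b (e, N) : ℝ)) δ → 0 ≤ δ → δ ≤ 2⁻¹ ^ d e →
      2⁻¹ ^ d e * muR {Y | prepend (unary e) Y ∈ INF c} = δ := by
  have hscale := computable_rat_mul (f := fun x : (ℕ × ℕ) × ℚ => ((2 ^ d x.1.1 : ℕ) : ℚ))
    (g := fun x => x.2) (by fun_prop) (by fun_prop)
  obtain ⟨P, hP, hPb⟩ := exists_computable_digits_mem_piTwoClass_iff
    (b := fun x => ((2 ^ d x.1 : ℕ) : ℚ) * b x)
    (limitComputable_comp₂ (f := fun (x : ℕ × ℕ) (q : ℚ) => ((2 ^ d x.1 : ℕ) : ℚ) * q) hscale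
      (limitComputable_of_computable computable_id) hb)
  obtain ⟨c, hc⟩ := exists_machine_prepend_unary_mem_INF_iff hP
  refine ⟨c, fun e δ hδ h0 h1 => ?_⟩
  have hset : {Y | prepend (unary e) Y ∈ INF c} = piTwoClass (P e) := Set.ext (hc e)
  have hglb : IsGLB (Set.range fun N => ((((2 ^ d e : ℕ) : ℚ) * b (e, N) : ℚ) : ℝ))
      (2 ^ d e * δ) := by
    simpa [← Set.range_comp, Function.comp_def] using hδ.mul_left (a := 2 ^ d e) (by positivity)
  have hle : 2 ^ d e * δ ≤ 1 := by
    rwa [inv_pow, ← one_div, le_div_iff₀' (by positivity)] at h1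
  rw [hset, muR_eq_of_digits_mem_iff_mem_Icc (measurableSet_piTwoClass _) le_rfl (b := 2 ^ d e * δ)
    (by positivity) hle fun y h0 h1 => ?_]
  · rw [sub_zero, ← mul_assoc, ← mul_pow]
    norm_num
  · rw [hPb e _ hglb y h0 h1, Set.mem_Icc, and_iff_right h0]

theorem exists_limitComputable_isGLB_add_muR_notMem_testSet (u : CodeO) {π : ℕ → List Bool}
    (hπ : Computable π) {W : Set ℕ} (hW : CeIn (iterJump 1) W)
    (hvol : ∀ i, volume (testSet W i) ≤ ENNReal.ofReal (2⁻¹ ^ i)) :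
    ∃ b : ℕ × ℕ → ℚ, LimitComputable b ∧ ∀ e, ∃ δ : ℝ,
      IsGLB (Set.range fun N => (b (e, N) : ℝ)) δ ∧ 0 ≤ δ ∧ δ ≤ 2⁻¹ ^ (π e).length ∧
      δ + muR (INF u \ {X | Extends X (π e)}) ∉ testSet W (π e).length := by
  obtain ⟨I, hI, hIW⟩ := exists_limitComputable_testSet_eq_iUnion hW
  obtain ⟨a, ha, haπ⟩ := exists_limitComputable_isGLB_muR_INF_diff u hπ
  have hr : Computable fun e => (1 : ℚ) / 2 ^ (π e).length :=
    computable_rat_div_two_pow (computable_const 1) (by fun_prop)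
  refine ⟨_, limitComputable_avoid hr (limitComputable_comp_computable hI
    (g := fun x : ℕ × ℕ => ((π x.1).length, x.2)) (by fun_prop)) ha, fun e => ?_⟩
  have hre : (((1 : ℚ) / 2 ^ (π e).length : ℚ) : ℝ) = 2⁻¹ ^ (π e).length := by simp
  obtain ⟨hrec, htest⟩ := hIW (π e).length
  have hv := hvol (π e).length
  rw [htest, ← hre] at hv
  obtain ⟨δ, h0, h1, hδ, hnot⟩ :=
    exists_isGLB_avoid_add_notMem (by positivity) (haπ e).1 (haπ e).2 hrec hv
  exact ⟨δ, hδ, h0, hre ▸ h1, htest ▸ hnot⟩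

theorem nRandom_two_muR_INF (hu : UniversalOM u) : NRandom 2 (muR (INF u)) := by
  intro W hW hvol
  obtain ⟨σ, -, -, hσ⟩ := hu
  let π (e : ℕ) : List Bool := (Encodable.decode e).getD [] ++ unary e
  have hπ : Computable π := by fun_prop
  obtain ⟨b, hb, hbW⟩ := exists_limitComputable_isGLB_add_muR_notMem_testSet u hπ hW hvol
  obtain ⟨c, hc⟩ := exists_machine_muR_eq_of_isGLB (d := fun e => (π e).length) (by fun_prop) hb
  let e := Encodable.encode (σ c)
  have hπe : π e = σ c ++ unary e := by simp [π, e]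
  obtain ⟨δ, hδ, h0, h1, hnot⟩ := hbW e
  refine ⟨(π e).length, ?_⟩
  have hmem (X : Cantor) (hX : Extends X (π e)) :
      X ∈ INF u ↔ shift (π e).length X ∈ {Y | prepend (unary e) Y ∈ INF c} := by
    have hpre : prepend (σ c) (prepend (unary e) (shift (π e).length X)) = X := by
      rw [← prepend_append, ← hπe, prepend_shift hX]
    simp only [Set.mem_ofPred_eq, INF, domSet, ← hσ c, hpre]
  have hmeas : MeasurableSet {Y | prepend (unary e) Y ∈ INF c} :=
    measurable_prepend _ (measurableSet_INF c)
  rwa [muR_eq_add_muR_diff_extends hmeas hmem, hc e δ hδ h0 h1]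

end Random

/-! ### Every 2-random `∅'`-right-c.e. real is an infinitude probability -/

section LagMin

variable {a g : ℕ → ℝ}

/-- The minimum of `a s - (g s - g t)` over `s ≤ t`, computed recursively. For antitone `g` it drops
by at most `g t - g (t + 1)` at step `t`, except when `a (t + 1)` lies below it. -/
noncomputable def lagMin (a g : ℕ → ℝ) : ℕ → ℝ
  | 0 => a 0
  | t + 1 => min (lagMin a g t - (g t - g (t + 1))) (a (t + 1))

theorem lagMin_le {s t : ℕ} (h : s ≤ t) : lagMin a g t ≤ a s - (g s - g t) := by
  induction t, h using Nat.le_induction with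
  | base => cases s <;> simp [lagMin]
  | succ t _ ih =>
    have hstep : lagMin a g (t + 1) ≤ lagMin a g t - (g t - g (t + 1)) := min_le_left _ _
    linarith

theorem setOf_exists_lag_lt_subset (ha : Antitone a) :
    {x : ℝ | ∃ s t, s ≤ t ∧ a s - (g s - g t) < x ∧ x < a t} ⊆
      ⋃ r, Set.Ioc (lagMin a g r - (g r - g (r + 1))) (lagMin a g r) := by
  rintro x ⟨s, t, hst, hlow, hupp⟩
  have hlt : lagMin a g t < x := (lagMin_le hst).trans_lt hlow
  have hex : ∃ r, lagMin a g r < x := ⟨t, hlt⟩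
  have hxa : x < a (Nat.find hex) := hupp.trans_le (ha (Nat.find_min' hex hlt))
  have hfind := Nat.find_spec hex
  rcases hr : Nat.find hex with _ | r
  · rw [hr] at hfind hxa
    exact absurd hxa hfind.not_gt
  · rw [hr] at hfind hxa
    have hstep : lagMin a g r - (g r - g (r + 1)) < x :=
      (min_lt_iff.1 hfind).resolve_right hxa.not_gt
    exact Set.mem_iUnion.2 ⟨r, hstep, not_lt.1 (Nat.find_min hex (by omega))⟩

theorem volume_setOf_exists_lag_lt_le {β : ℝ} (ha : Antitone a) (hg : Antitone g)
    (hβ : ∀ n, β ≤ g n) :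
    volume {x : ℝ | ∃ s t, s ≤ t ∧ a s - (g s - g t) < x ∧ x < a t} ≤
      ENNReal.ofReal (g 0 - β) := by
  refine (measure_mono (setOf_exists_lag_lt_subset ha)).trans ((measure_iUnion_le _).trans ?_)
  refine ENNReal.tsum_le_of_sum_range_le fun n => ?_
  calc ∑ r ∈ Finset.range n, volume (Set.Ioc (lagMin a g r - (g r - g (r + 1))) (lagMin a g r))
    _ = ∑ r ∈ Finset.range n, ENNReal.ofReal (g r - g (r + 1)) := by
      simp only [Real.volume_Ioc, sub_sub_cancel]
    _ = ENNReal.ofReal (g 0 - g n) := by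
      rw [← ENNReal.ofReal_sum_of_nonneg fun r _ => sub_nonneg.2 (hg r.le_succ),
        Finset.sum_range_sub']
    _ ≤ ENNReal.ofReal (g 0 - β) := ENNReal.ofReal_le_ofReal (sub_le_sub_left (hβ n) _)

theorem isGLB_range_sub_of_forall_le_lag {α γ : ℝ} (ha : Antitone a) (hg : Antitone g)
    (hα : IsGLB (Set.range a) α) (hγ : IsGLB (Set.range g) γ)
    (h : ∀ s t, s ≤ t → α ≤ a s - (g s - g t)) :
    IsGLB (Set.range fun n => a n - g n) (α - γ) := by
  have hglim := tendsto_atTop_isGLB hg hγ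
  refine ⟨Set.forall_mem_range.2 fun n => ?_, fun x hx => ?_⟩
  · have hle : α ≤ a n - (g n - γ) := ge_of_tendsto ((hglim.const_sub (g n)).const_sub (a n))
      ((Filter.eventually_ge_atTop n).mono fun t ht => h n t ht)
    linarith
  · exact ge_of_tendsto' ((tendsto_atTop_isGLB ha hα).sub hglim) fun n => hx ⟨n, rfl⟩

end LagMin

section KuceraSlaman

theorem exists_ceIn_iterJump_one_testSet_eq_iUnion {I : ℕ × ℕ → ℚ × ℚ} (hI : LimitComputable I) :
    ∃ W, CeIn (iterJump 1) W ∧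
      ∀ i, testSet W i = ⋃ n, Set.Ioo ((I (i, n)).1 : ℝ) (I (i, n)).2 := by
  refine ⟨{m | ∃ n, (Nat.pair m.unpair.1 (Encodable.encode (I (m.unpair.1, n))) == m) = true},
    ceIn_iterJump_one_iff.2 ⟨fun x => Nat.pair x.1.unpair.1
      (Encodable.encode (I (x.1.unpair.1, x.2))) == x.1, ?_, fun m => Iff.rfl⟩, fun i => ?_⟩
  · exact limitComputable_comp₂
      (f := fun (J : ℚ × ℚ) (m : ℕ) => Nat.pair m.unpair.1 (Encodable.encode J) == m)
      (g := fun x : ℕ × ℕ => I (x.1.unpair.1, x.2)) (h := fun x => x.1) (by fun_prop)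
      (limitComputable_comp_computable hI (by fun_prop))
      (limitComputable_of_computable (by fun_prop))
  · ext x
    simp only [testSet, Set.mem_ofPred_eq, Nat.unpair_pair, beq_iff_eq, Nat.pair_eq_pair, true_and,
      Encodable.encode_inj, Set.mem_iUnion, Set.mem_Ioo]
    constructor
    · rintro ⟨p, q, ⟨n, hn⟩, hx⟩
      exact ⟨n, by rwa [hn]⟩
    · rintro ⟨n, hx⟩
      exact ⟨_, _, ⟨n, rfl⟩, hx⟩

theorem limitComputable_lag_interval {a b : ℕ → ℚ} (ha : LimitComputable a)
    (hb : LimitComputable b) (k : ℕ) : LimitComputable fun x : ℕ × ℕ =>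
      (a x.2.unpair.1 - (b x.2.unpair.1 - b (x.2.unpair.1 + x.2.unpair.2)) / 2 ^ (x.1 + k),
        a (x.2.unpair.1 + x.2.unpair.2)) := by
  have hlow : Computable fun z : (ℚ × ℚ) × (ℚ × ℚ) × ℕ =>
      z.1.1 - (z.2.1.1 - z.2.1.2) / 2 ^ (z.2.2 + k) :=
    computable_rat_sub (by fun_prop) (computable_rat_div_two_pow
      (computable_rat_sub (by fun_prop) (by fun_prop)) (by fun_prop))
  have hs : Computable fun x : ℕ × ℕ => x.2.unpair.1 := by fun_prop
  have ht : Computable fun x : ℕ × ℕ => x.2.unpair.1 + x.2.unpair.2 := by fun_prop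
  have hat := limitComputable_comp_computable ha ht
  have hinput := limitComputable_pair
    (limitComputable_pair (limitComputable_comp_computable ha hs) hat)
    (limitComputable_pair
      (limitComputable_pair (limitComputable_comp_computable hb hs)
        (limitComputable_comp_computable hb ht))
      (limitComputable_of_computable (f := fun x : ℕ × ℕ => x.1) (by fun_prop)))
  exact limitComputable_pair (limitComputable_comp (limitComputable_of_computable hlow) hinput) hat

theorem exists_ceIn_iterJump_one_testSet_eq_setOf_lag_lt {a b : ℕ → ℚ} (ha : LimitComputable a)
    (hb : LimitComputable b) (k : ℕ) : ∃ W, CeIn (iterJump 1) W ∧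
      ∀ i, testSet W i = {x : ℝ | ∃ s t, s ≤ t ∧
        (a s : ℝ) - (2⁻¹ ^ (i + k) * b s - 2⁻¹ ^ (i + k) * b t) < x ∧ x < a t} := by
  obtain ⟨W, hW, htest⟩ :=
    exists_ceIn_iterJump_one_testSet_eq_iUnion (limitComputable_lag_interval ha hb k)
  refine ⟨W, hW, fun i => ?_⟩
  have hcast (p q : ℚ) : (((p - q) / 2 ^ (i + k) : ℚ) : ℝ) =
      2⁻¹ ^ (i + k) * p - 2⁻¹ ^ (i + k) * q := by
    push_cast
    rw [inv_pow, div_eq_inv_mul, mul_sub]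
  ext x
  simp only [htest, Set.mem_iUnion, Set.mem_Ioo, Set.mem_ofPred_eq, Rat.cast_sub, hcast]
  constructor
  · rintro ⟨n, hx⟩
    exact ⟨_, _, Nat.le_add_right _ _, hx⟩
  · rintro ⟨s, t, hst, hx⟩
    refine ⟨Nat.pair s (t - s), ?_⟩
    rwa [Nat.unpair_pair, Nat.add_sub_cancel' hst]

/-- If this failed for every `d`, then for each `d` some stages `s ≤ t` would put `α` into the
interval from `a s - (b s - b t) / 2 ^ d` to `a t`; these intervals form a test relative to `∅'`. -/
theorem exists_forall_le_lag {α β : ℝ} (hα : NRandom 2 α) {a b : ℕ → ℚ}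
    (ha : LimitComputable a) (haa : Antitone a) (hαa : ∀ n, α < a n)
    (hb : LimitComputable b) (hba : Antitone b) (hβ : ∀ n, β ≤ b n) (k₀ : ℕ) :
    ∃ d, k₀ ≤ d ∧ ∀ s t, s ≤ t → α ≤ a s - (2⁻¹ ^ d * b s - 2⁻¹ ^ d * b t) := by
  obtain ⟨k₁, hk₁⟩ := pow_unbounded_of_one_lt (b 0 - β) one_lt_two
  let k := k₀ + k₁
  have hk : b 0 - β ≤ 2 ^ k := hk₁.le.trans (pow_le_pow_right₀ one_le_two (by omega))
  obtain ⟨W, hW, htest⟩ := exists_ceIn_iterJump_one_testSet_eq_setOf_lag_lt ha hb k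
  have hvol (i : ℕ) : volume (testSet W i) ≤ ENNReal.ofReal (2⁻¹ ^ i) := by
    rw [htest]
    refine (volume_setOf_exists_lag_lt_le (Rat.cast_mono.comp_antitone haa)
      ((Rat.cast_mono.comp_antitone hba).const_mul (a := 2⁻¹ ^ (i + k)) (by positivity))
      fun n => mul_le_mul_of_nonneg_left (hβ n) (by positivity)).trans
        (ENNReal.ofReal_le_ofReal ?_)
    calc 2⁻¹ ^ (i + k) * (b 0 : ℝ) - 2⁻¹ ^ (i + k) * β
      _ ≤ 2⁻¹ ^ (i + k) * 2 ^ k := by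
        rw [← mul_sub]
        exact mul_le_mul_of_nonneg_left hk (by positivity)
      _ = 2⁻¹ ^ i := by rw [pow_add, mul_assoc, ← mul_pow]; norm_num
  obtain ⟨i, hi⟩ := hα W hW hvol
  refine ⟨i + k, by omega, fun s t hst => not_lt.1 fun hlt => hi ?_⟩
  rw [htest]
  exact ⟨s, t, hst, hlt, hαa t⟩

end KuceraSlaman

section Mixture

variable {π : List Bool} {u u₀ c₁ : CodeO}

theorem exists_universalOM : ∃ u, UniversalOM u := by
  obtain ⟨u, hu⟩ := exists_machine_evalO_prepend_unary
  exact ⟨u, fun c => unary c.encode, ⟨fun e => Encodable.encode (unary e), by fun_prop,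
    fun _ => rfl⟩, fun _ ⟨_, hc⟩ _ ⟨_, hd⟩ => isPrefixFree_range_unary _ ⟨_, hc⟩ _ ⟨_, hd⟩, hu⟩

theorem universalOM_of_forall_extends (hu₀ : UniversalOM u₀)
    (h : ∀ X n, Extends X π → evalO X u n = evalO (shift π.length X) u₀ n) : UniversalOM u := by
  obtain ⟨σ, ⟨f, hf, hfσ⟩, hfree, hσ⟩ := hu₀
  refine ⟨fun c => π ++ σ c, ⟨fun e => Encodable.encode
    (π ++ (Encodable.decode (α := List Bool) (f e)).getD []), by fun_prop, fun c => ?_⟩, ?_,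
    fun c X n => ?_⟩
  · simp only [hfσ, Encodable.encodek, Option.getD_some]
  · rintro _ ⟨c, rfl⟩ _ ⟨c', rfl⟩ hpre
    exact congrArg (π ++ ·)
      (hfree _ ⟨c, rfl⟩ _ ⟨c', rfl⟩ ((List.prefix_append_right_inj π).1 hpre))
  · rw [prepend_append, h _ _ (extends_prepend _ _), shift_prepend, hσ]

theorem muR_INF_eq_of_evalO_eq_ite
    (h : ∀ X n, evalO X u n =
      if Extends X π then evalO (shift π.length X) u₀ n else evalO X c₁ n) :
    muR (INF u) = 2⁻¹ ^ π.length * muR (INF u₀) + muR (INF c₁ \ {X | Extends X π}) := by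
  have hmem (X : Cantor) (hX : Extends X π) : X ∈ INF u ↔ shift π.length X ∈ INF u₀ := by
    simp only [INF, domSet, Set.mem_ofPred_eq, h, if_pos hX]
  have hdiff : INF u \ {X | Extends X π} = INF c₁ \ {X | Extends X π} := by
    refine Set.ext fun X => and_congr_left fun hX => ?_
    simp only [INF, domSet, Set.mem_ofPred_eq, h, if_neg (show ¬Extends X π from hX)]
  rw [muR_eq_add_muR_diff_extends (measurableSet_INF u₀) hmem, hdiff]

theorem exists_machine_muR_INF_diff_extends_eq {c : ℕ → ℚ} (hc : LimitComputable c) {γ : ℝ}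
    (hγ : IsGLB (Set.range fun n => (c n : ℝ)) γ) {d : ℕ} (hd : 2⁻¹ ^ d ≤ γ) (h1 : γ ≤ 1) :
    ∃ c₁, muR (INF c₁ \ {X | Extends X (List.replicate d false)}) = γ - 2⁻¹ ^ d := by
  obtain ⟨P, hP, hPγ⟩ := exists_computable_digits_mem_piTwoClass_iff
    (limitComputable_comp_computable hc (g := fun x : ℕ × ℕ => x.2) (by fun_prop))
  obtain ⟨c₁, hc₁⟩ := exists_machine_INF_eq_piTwoClass (P := P 0)
    (hP.comp (g := fun x : ℕ × List Bool => (0, x)) (by fun_prop))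
  refine ⟨c₁, muR_eq_of_digits_mem_iff_mem_Icc
    ((measurableSet_INF c₁).diff (measurableSet_initSeg _ (· = _))) (by positivity) hd h1
    fun y hy0 hy1 => ?_⟩
  have hext : Extends (digits y) (List.replicate d false) ↔ y < 2⁻¹ ^ d := by
    rw [extends_digits_iff hy0 hy1, binaryValue_replicate_false, List.length_replicate,
      Nat.floor_eq_zero, inv_pow, ← one_div, lt_div_iff₀ (by positivity)]
  rw [Set.mem_sdiff, hc₁, hPγ 0 γ hγ y hy0 hy1]
  exact ((and_congr_right' (not_congr hext)).trans (by rw [not_lt, and_comm])).trans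
    Set.mem_Icc.symm

theorem exists_limitComputable_isGLB_mixture {α : ℝ} (h0 : 0 < α) (h1 : α < 1)
    (hα : NRandom 2 α) (hr : RightCeIn (iterJump 1) α) (u₀ : CodeO) :
    ∃ (d : ℕ) (c : ℕ → ℚ), LimitComputable c ∧
      IsGLB (Set.range fun n => (c n : ℝ)) (α - 2⁻¹ ^ d * muR (INF u₀) + 2⁻¹ ^ d) ∧
      2⁻¹ ^ d ≤ α ∧ 2⁻¹ ^ d ≤ 1 - α := by
  obtain ⟨a, ha, haa, hαa, hαglb⟩ := exists_antitone_isGLB_of_rightCeIn_iterJump_one hr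
  obtain ⟨b, hb, hba, hμb, hμglb⟩ :=
    exists_antitone_isGLB_of_rightCeIn_iterJump_one (rightCeIn_muR_INF u₀)
  obtain ⟨k₀, hk₀⟩ := exists_pow_lt_of_lt_one (lt_min h0 (sub_pos.2 h1)) (two_inv_lt_one (α := ℝ))
  obtain ⟨d, hd, hlag⟩ := exists_forall_le_lag hα ha haa hαa hb hba (fun n => (hμb n).le) k₀
  have hsmall : (2⁻¹ : ℝ) ^ d ≤ min α (1 - α) :=
    (pow_le_pow_of_le_one (by norm_num) (by norm_num) hd).trans hk₀.le
  have hglb := isGLB_range_sub_of_forall_le_lag (Rat.cast_mono.comp_antitone haa)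
    ((Rat.cast_mono.comp_antitone hba).const_mul (a := 2⁻¹ ^ d) (by positivity)) hαglb
    (by simpa [← Set.range_comp, Function.comp_def] using
      hμglb.mul_left (a := (2⁻¹ : ℝ) ^ d) (by positivity)) hlag
  refine ⟨d, fun n => a n - b n / 2 ^ d + 1 / 2 ^ d, ?_, ?_,
    hsmall.trans (min_le_left _ _), hsmall.trans (min_le_right _ _)⟩
  · exact limitComputable_comp₂ (f := fun p q : ℚ => p - q / 2 ^ d + 1 / 2 ^ d)
      (computable_rat_add (computable_rat_sub (by fun_prop)
        (computable_rat_div_two_pow (by fun_prop) (by fun_prop)))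
        (computable_rat_div_two_pow (by fun_prop) (by fun_prop))) ha hb
  · simpa [← Set.range_comp, Function.comp_def, div_eq_inv_mul] using
      (OrderIso.addRight ((2⁻¹ : ℝ) ^ d)).isGLB_image'.2 hglb

theorem exists_universalOM_muR_INF_eq {α : ℝ} (h0 : 0 < α) (h1 : α < 1) (hα : NRandom 2 α)
    (hr : RightCeIn (iterJump 1) α) : ∃ u, UniversalOM u ∧ muR (INF u) = α := by
  obtain ⟨u₀, hu₀⟩ := exists_universalOM
  obtain ⟨d, c, hc, hglb, hdα, hdα'⟩ := exists_limitComputable_isGLB_mixture h0 h1 hα hr u₀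
  have hμ0 : 0 ≤ 2⁻¹ ^ d * muR (INF u₀) := mul_nonneg (by positivity) ENNReal.toReal_nonneg
  have hμ1 : 2⁻¹ ^ d * muR (INF u₀) ≤ 2⁻¹ ^ d :=
    mul_le_of_le_one_right (by positivity) measureReal_le_one
  obtain ⟨c₁, hc₁⟩ :=
    exists_machine_muR_INF_diff_extends_eq hc hglb (d := d) (by linarith) (by linarith)
  obtain ⟨u, hu⟩ := exists_machine_evalO_eq_ite_extends (List.replicate d false) u₀ c₁
  refine ⟨u, universalOM_of_forall_extends hu₀ fun X n hX => (hu X n).trans (if_pos hX), ?_⟩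
  rw [muR_INF_eq_of_evalO_eq_ite hu, hc₁, List.length_replicate]
  ring

end Mixture

/-- **Infinitude probability for universal oracle machines.**
The probability that the function computed by a universal oracle machine has infinite
domain is a 2-random `∅'`-right-c.e. real; conversely, every 2-random `∅'`-right-c.e.
real in `(0,1)` is the infinitude probability of some universal oracle machine. -/
theorem infinitude_probability_characterization :
    (∀ u : CodeO, UniversalOM u →
        NRandom 2 (muR (INF u)) ∧ RightCeIn (iterJump 1) (muR (INF u))) ∧
    (∀ α : ℝ, 0 < α → α < 1 → NRandom 2 α → RightCeIn (iterJump 1) α →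
        ∃ u : CodeO, UniversalOM u ∧ muR (INF u) = α) :=
  ⟨fun u hu => ⟨nRandom_two_muR_INF hu, rightCeIn_muR_INF u⟩,
    fun _ h0 h1 hα hr => exists_universalOM_muR_INF_eq h0 h1 hα hr⟩

end RandProb
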